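/- Let b>0, d∈ℕ, let (G_n)_{n≥0} be a (b,d)-expander, let α < 1/2 with α>0, and let c∈(0,1). There is a constant C_3, depending only on c, α, b, and d, such that for every n: p_{n,1−α}(c) − p_{n,α}(c) ≤ C_3 · (log|V_n|)^{−1/3}. -/

import Mathlib

open Filter

noncomputable section

/-- The spanning subgraph of `G` determined by the configuration `x : {0,1}^E`:
an edge of `G` is retained iff its coordinate equals `true`. -/
def percoGraph {V : Type*} (G : SimpleGraph V) (x : G.edgeSet → Bool) : SimpleGraph V :=
  SimpleGraph.fromEdgeSet {e : Sym2 V | ∃ h : e ∈ G.edgeSet, x ⟨e, h⟩ = true}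

/-- The vertex set of the connected component of `v` in the configuration `x`. -/
def percoComp {V : Type*} (G : SimpleGraph V) (x : G.edgeSet → Bool) (v : V) : Set V :=
  {u | (percoGraph G x).Reachable v u}

/-- The number of vertices of the connected component of `v` in the configuration `x`. -/
def compSize {V : Type*} (G : SimpleGraph V) (x : G.edgeSet → Bool) (v : V) : ℕ :=
  (percoComp G x v).ncard

/-- `L⁽¹⁾`: the number of vertices of the largest connected component of the configuration. -/
def largestComp {V : Type*} (G : SimpleGraph V) (x : G.edgeSet → Bool) : ℕ :=
  sSup (Set.range (compSize G x))

/-- The probability of a single configuration under the product Bernoulli(p) measure. -/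
def configProb {E : Type*} (p : ℝ) (x : E → Bool) : ℝ :=
  ∏ᶠ e : E, if x e then p else 1 - p

/-- The product Bernoulli(p) probability of a set of configurations. -/
def probC {E : Type*} (p : ℝ) (A : Set (E → Bool)) : ℝ :=
  ∑ᶠ x ∈ A, configProb p x

/-- Expectation under the product Bernoulli(p) measure. -/
def expC {E : Type*} (p : ℝ) (f : (E → Bool) → ℝ) : ℝ :=
  ∑ᶠ x : E → Bool, configProb p x * f x

/-- Variance under the product Bernoulli(p) measure. -/
def varC {E : Type*} (p : ℝ) (f : (E → Bool) → ℝ) : ℝ :=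
  expC p (fun x => f x ^ 2) - (expC p f) ^ 2

open Classical in
/-- The configuration `x` with coordinate `e` set to `b`. -/
def setEdge {E : Type*} (x : E → Bool) (e : E) (b : Bool) : E → Bool :=
  fun e' => if e' = e then b else x e'

/-- The operator `Δ_{e,p} f (x) = f(x) - ∫ f(x) dx(e)`. -/
def deltaE {E : Type*} (p : ℝ) (f : (E → Bool) → ℝ) (e : E) (x : E → Bool) : ℝ :=
  f x - (p * f (setEdge x e true) + (1 - p) * f (setEdge x e false))

/-- The norm `‖g‖_{1,p}`. -/
def norm1 {E : Type*} (p : ℝ) (g : (E → Bool) → ℝ) : ℝ :=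
  expC p fun x => |g x|

/-- The squared norm `‖g‖_{2,p}²`. -/
def sqNorm2 {E : Type*} (p : ℝ) (g : (E → Bool) → ℝ) : ℝ :=
  expC p fun x => g x ^ 2

/-- `|E(S, Sᶜ)|`: the number of edges of `G` with one endpoint in `S` and the other outside `S`
(counted via the ordered pair whose first coordinate lies in `S`). -/
def edgeBoundaryCard {V : Type*} (G : SimpleGraph V) (S : Set V) : ℕ :=
  {q : V × V | G.Adj q.1 q.2 ∧ q.1 ∈ S ∧ q.2 ∉ S}.ncard

/-- The maximal degree of `G` is at most `d`. -/
def DegreeLE {V : Type*} (G : SimpleGraph V) (d : ℕ) : Prop :=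
  ∀ v, {u | G.Adj v u}.ncard ≤ d

/-- The Cheeger (edge-isoperimetric) constant of `G` is strictly greater than `b`. -/
def CheegerGT {V : Type*} (G : SimpleGraph V) (b : ℝ) : Prop :=
  ∀ S : Set V, 0 < S.ncard → 2 * S.ncard ≤ Nat.card V →
    b * (S.ncard : ℝ) < (edgeBoundaryCard G S : ℝ)

/-- A `(b,d)`-expander: a sequence of finite graphs with `|V_n| → ∞`, maximal degree at most `d`
and Cheeger constant greater than `b`. -/
structure ExpanderSeq (b : ℝ) (d : ℕ) where
  V : ℕ → Type
  finV : ∀ n, Finite (V n)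
  G : ∀ n, SimpleGraph (V n)
  card_tendsto : Tendsto (fun n => Nat.card (V n)) atTop atTop
  degree_le : ∀ n, DegreeLE (G n) d
  cheeger_gt : ∀ n, CheegerGT (G n) b

/-!
Let `Φ` be the sum of `max 0 (s - k)` over the sizes `s` of the clusters, with `N = |V|` and
`k = N ^ (1 / 4)`. Flipping an edge changes `Φ` by at most `2 * k`, so by the Efron–Stein
inequality `Φ` is concentrated at the scale `t = N / log N`. The edge boundaries of the large
clusters and Russo's formula give a logistic differential inequality: the mean of `Φ` grows at a
rate of order `N` while it stays away from `0` and from `N`.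

Let `p` and `q` be the two ends of the threshold window. If `q - p > t / N`, then, as `Φ ≤ N`,
the mean of `Φ` has derivative at most of order `N ^ 2 / t` at some `s` in the upper half of
`[p, q]`. At such an `s` the large clusters rarely split into two groups of mass at least `t`:
by expansion many paths of length `O(log log N)` would join the two groups, and opening one of
them edge by edge merges two clusters larger than `k`, which would make the derivative of `Φ`
too large. Hence `Φ` is close to the size of the largest cluster at `s`, so its mean is at most
`c * N + 5 * t` there, while it is at least `c * N - 2 * t` at `p`. The growth rate of the mean
therefore bounds `s - p`, and with it `q - p`, by a constant times `1 / log N`.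
-/

/-! ### Bernoulli measures on the cube -/

section Configurations

variable {E : Type*}

theorem setEdge_eq_update [DecidableEq E] (x : E → Bool) (e : E) (b : Bool) :
    setEdge x e b = Function.update x e b := by
  funext e'
  by_cases h : e' = e <;> simp [setEdge, h]

@[simp]
theorem setEdge_apply_self (x : E → Bool) (e : E) (b : Bool) : setEdge x e b e = b :=
  if_pos rfl

theorem setEdge_apply_of_ne {e e' : E} (h : e' ≠ e) (x : E → Bool) (b : Bool) :
    setEdge x e b e' = x e' :=
  if_neg h

theorem setEdge_eq_self {x : E → Bool} {e : E} {b : Bool} (h : x e = b) : setEdge x e b = x := by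
  classical
  rw [setEdge_eq_update, ← h, Function.update_eq_self]

@[simp]
theorem setEdge_setEdge (x : E → Bool) (e : E) (a b : Bool) :
    setEdge (setEdge x e a) e b = setEdge x e b := by
  classical
  simp only [setEdge_eq_update, Function.update_idem]

theorem setEdge_comm {e e' : E} (h : e ≠ e') (x : E → Bool) (a b : Bool) :
    setEdge (setEdge x e a) e' b = setEdge (setEdge x e' b) e a := by
  classical
  simp only [setEdge_eq_update, Function.update_comm h.symm]

theorem le_setEdge_true (x : E → Bool) (e : E) : x ≤ setEdge x e true := by
  classical
  rw [setEdge_eq_update, le_update_self_iff]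
  exact Bool.le_true _

theorem setEdge_false_le (x : E → Bool) (e : E) : setEdge x e false ≤ x := by
  classical
  rw [setEdge_eq_update, update_le_self_iff]
  exact Bool.false_le _

/-- The discrete derivative (influence function) of `f` at the coordinate `e`. -/
def edgeDiff (f : (E → Bool) → ℝ) (e : E) (x : E → Bool) : ℝ :=
  f (setEdge x e true) - f (setEdge x e false)

/-- The average of `f` over the coordinate `e`; the operator `deltaE p f e` is `f` minus it. -/
def edgeAvg (p : ℝ) (f : (E → Bool) → ℝ) (e : E) (x : E → Bool) : ℝ :=
  p * f (setEdge x e true) + (1 - p) * f (setEdge x e false)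

theorem edgeDiff_nonneg {f : (E → Bool) → ℝ} (hf : Monotone f) (e : E) (x : E → Bool) :
    0 ≤ edgeDiff f e x :=
  sub_nonneg.2 (hf ((setEdge_false_le x e).trans (le_setEdge_true x e)))

theorem sub_le_edgeDiff {f : (E → Bool) → ℝ} (hf : Monotone f) (e : E) (x : E → Bool) :
    f (setEdge x e true) - f x ≤ edgeDiff f e x :=
  sub_le_sub_left (hf (setEdge_false_le x e)) _

theorem edgeDiff_edgeAvg_of_ne {e e' : E} (h : e ≠ e') (p : ℝ) (f : (E → Bool) → ℝ) :
    edgeDiff (edgeAvg p f e) e' = edgeAvg p (edgeDiff f e') e := by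
  funext x
  simp only [edgeDiff, edgeAvg, setEdge_comm h]
  ring

theorem dependsOn_edgeAvg {f : (E → Bool) → ℝ} {e : E} {S : Set E} (hf : DependsOn f (insert e S))
    (p : ℝ) : DependsOn (edgeAvg p f e) S := by
  intro x y hxy
  have key (b : Bool) : f (setEdge x e b) = f (setEdge y e b) := by
    refine hf fun e' he' => ?_
    by_cases h : e' = e
    · rw [h, setEdge_apply_self, setEdge_apply_self]
    · rw [setEdge_apply_of_ne h, setEdge_apply_of_ne h, hxy e' (he'.resolve_left h)]
  simp only [edgeAvg, key]

end Configurations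

section Expectation

variable {E : Type*}

theorem configProb_nonneg {p : ℝ} (hp : p ∈ Set.Icc (0 : ℝ) 1) (x : E → Bool) :
    0 ≤ configProb p x :=
  finprod_nonneg fun e => by
    split_ifs
    exacts [hp.1, sub_nonneg.2 hp.2]

theorem configProb_eq_prod [Fintype E] (p : ℝ) (x : E → Bool) :
    configProb p x = ∏ e, if x e then p else 1 - p :=
  finprod_eq_prod_of_fintype _

theorem configProb_eq_prod_erase_mul [Fintype E] [DecidableEq E] (p : ℝ) (x : E → Bool) (e : E) :
    configProb p x
      = (∏ j ∈ Finset.univ.erase e, if x j then p else 1 - p) * if x e then p else 1 - p := by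
  rw [configProb_eq_prod, Finset.prod_erase_mul _ _ (Finset.mem_univ e)]

theorem expC_eq_sum [Fintype (E → Bool)] (p : ℝ) (f : (E → Bool) → ℝ) :
    expC p f = ∑ x, configProb p x * f x :=
  finsum_eq_sum_of_fintype _

theorem expC_nonneg {p : ℝ} (hp : p ∈ Set.Icc (0 : ℝ) 1) {f : (E → Bool) → ℝ} (h : 0 ≤ f) :
    0 ≤ expC p f :=
  finsum_nonneg fun x => mul_nonneg (configProb_nonneg hp x) (h x)

theorem expC_const_mul (p a : ℝ) (f : (E → Bool) → ℝ) :
    expC p (fun x => a * f x) = a * expC p f := by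
  simp only [expC, mul_left_comm _ a]
  exact (mul_finsum _ _).symm

section Finite

variable [Finite E]

theorem expC_mono {p : ℝ} (hp : p ∈ Set.Icc (0 : ℝ) 1) {f g : (E → Bool) → ℝ} (h : f ≤ g) :
    expC p f ≤ expC p g := by
  cases nonempty_fintype (E → Bool)
  simp only [expC_eq_sum]
  gcongr with x
  exacts [configProb_nonneg hp x, h x]

theorem expC_add (p : ℝ) (f g : (E → Bool) → ℝ) :
    expC p (fun x => f x + g x) = expC p f + expC p g := by
  simp only [expC, mul_add]
  exact finsum_add_distrib (Set.toFinite _) (Set.toFinite _)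

theorem expC_sub (p : ℝ) (f g : (E → Bool) → ℝ) :
    expC p (fun x => f x - g x) = expC p f - expC p g := by
  simp only [expC, mul_sub]
  exact finsum_sub_distrib (Set.toFinite _) (Set.toFinite _)

theorem expC_sum {ι : Type*} (p : ℝ) (s : Finset ι) (f : ι → (E → Bool) → ℝ) :
    expC p (fun x => ∑ i ∈ s, f i x) = ∑ i ∈ s, expC p (f i) := by
  simp only [expC, Finset.mul_sum]
  exact finsum_sum_comm s _ fun _ _ => Set.toFinite _

theorem expC_const (p a : ℝ) : expC p (fun _ : E → Bool => a) = a := by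
  classical
  cases nonempty_fintype E
  have sum_one : ∑ x : E → Bool, configProb p x = 1 := by
    have := Finset.prod_univ_sum (fun _ : E => (Finset.univ : Finset Bool))
      fun _ t => if t then p else 1 - p
    rw [Fintype.piFinset_univ] at this
    simp only [configProb_eq_prod, ← this]
    simp
  rw [expC_eq_sum, ← Finset.sum_mul, sum_one, one_mul]

end Finite

/-- Both the conditional expectation on the other coordinates and Russo's formula are instances
of this identity, with `g` the weighted function and its derivative in the parameter. -/
theorem sum_prod_erase_mul [Fintype E] [DecidableEq E] (p : ℝ) (e : E) (g : (E → Bool) → ℝ) :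
    ∑ x : E → Bool, (∏ j ∈ Finset.univ.erase e, if x j then p else 1 - p) * g x
      = expC p (fun x => g (setEdge x e true) + g (setEdge x e false)) := by
  set w : (E → Bool) → ℝ := fun x => ∏ j ∈ Finset.univ.erase e, if x j then p else 1 - p
  let flip (x : E → Bool) : E → Bool := setEdge x e (!x e)
  have flip_involutive : Function.Involutive flip := fun x => by
    simp [flip, setEdge_eq_self]
  have weight_flip (x : E → Bool) :
      w (flip x) * (if flip x e then 1 - p else p) = configProb p x := by
    rw [configProb_eq_prod_erase_mul p x e]
    congr 1
    · refine Finset.prod_congr rfl fun j hj => ?_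
      simp only [flip, setEdge_apply_of_ne (Finset.ne_of_mem_erase hj)]
    · cases h : x e <;> simp [flip, h]
  calc ∑ x, w x * g x
      = ∑ x, configProb p x * g x + ∑ x, w x * (if x e then 1 - p else p) * g x := by
        rw [← Finset.sum_add_distrib]
        refine Finset.sum_congr rfl fun x _ => ?_
        rw [configProb_eq_prod_erase_mul p x e]
        split_ifs <;> ring
    _ = ∑ x, configProb p x * g x + ∑ x, configProb p x * g (flip x) := by
        rw [← flip_involutive.bijective.sum_comp
          fun x => w x * (if x e then 1 - p else p) * g x]
        simp only [weight_flip]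
    _ = expC p (fun x => g (setEdge x e true) + g (setEdge x e false)) := by
        rw [expC_eq_sum, ← Finset.sum_add_distrib]
        refine Finset.sum_congr rfl fun x _ => ?_
        rw [← mul_add]
        cases h : x e <;> simp [flip, h, setEdge_eq_self, add_comm]

theorem expC_edgeAvg [Finite E] (p : ℝ) (f : (E → Bool) → ℝ) (e : E) :
    expC p (edgeAvg p f e) = expC p f := by
  classical
  cases nonempty_fintype E
  rw [expC_eq_sum p f]
  simp only [configProb_eq_prod_erase_mul p _ e, mul_assoc]
  rw [sum_prod_erase_mul p e fun x => (if x e then p else 1 - p) * f x]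
  congr 1
  funext x
  simp [edgeAvg]

theorem mul_expC_setEdge_true_le [Finite E] {p : ℝ} (hp : p ∈ Set.Icc (0 : ℝ) 1)
    {f : (E → Bool) → ℝ} (hf : 0 ≤ f) (e : E) :
    p * expC p (fun x => f (setEdge x e true)) ≤ expC p f := by
  rw [← expC_edgeAvg p f e, ← expC_const_mul]
  exact expC_mono hp fun x =>
    le_add_of_nonneg_right (mul_nonneg (sub_nonneg.2 hp.2) (hf _))

theorem expC_indicator_open [Finite E] (p : ℝ) (e : E) :
    expC p (fun x : E → Bool => if x e then 1 else 0) = p := by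
  have edgeAvg_eq : edgeAvg p (fun x => if x e then 1 else 0) e = fun _ => p := by
    funext x
    simp [edgeAvg]
  rw [← expC_edgeAvg p _ e, edgeAvg_eq, expC_const]

theorem hasDerivAt_expC [Fintype E] (p : ℝ) (f : (E → Bool) → ℝ) :
    HasDerivAt (fun p => expC p f) (∑ e, expC p (edgeDiff f e)) p := by
  classical
  have weight_deriv (t : Bool) :
      HasDerivAt (fun p : ℝ => if t then p else 1 - p) (if t then 1 else -1) p := by
    cases t
    · simpa using (hasDerivAt_id p).const_sub 1
    · simpa using hasDerivAt_id' p
  have config_deriv (x : E → Bool) : HasDerivAt (fun p => configProb p x)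
      (∑ e, (∏ j ∈ Finset.univ.erase e, if x j then p else 1 - p) * if x e then 1 else -1) p := by
    simp only [configProb_eq_prod]
    simpa only [smul_eq_mul] using HasDerivAt.fun_finsetProd fun e _ => weight_deriv (x e)
  rw [funext fun q => expC_eq_sum q f]
  refine (HasDerivAt.fun_sum fun x _ => (config_deriv x).mul_const (f x)).congr_deriv ?_
  simp only [Finset.sum_mul]
  rw [Finset.sum_comm]
  refine Finset.sum_congr rfl fun e _ => ?_
  simp only [mul_assoc]
  rw [sum_prod_erase_mul p e fun x => (if x e then 1 else -1) * f x]
  congr 1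
  funext x
  simp [edgeDiff, sub_eq_add_neg]

theorem exists_sum_expC_edgeDiff_eq_slope [Fintype E] (f : (E → Bool) → ℝ)
    {p q : ℝ} (hpq : p < q) :
    ∃ s ∈ Set.Ioo p q, ∑ e, expC s (edgeDiff f e) = (expC q f - expC p f) / (q - p) :=
  exists_hasDerivAt_eq_slope (fun s => expC s f) _ hpq
    (fun s _ => (hasDerivAt_expC s f).continuousAt.continuousWithinAt)
    fun s _ => hasDerivAt_expC s f

theorem expC_monotoneOn [Finite E] {f : (E → Bool) → ℝ} (hf : Monotone f) :
    MonotoneOn (fun p => expC p f) (Set.Icc 0 1) := by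
  cases nonempty_fintype E
  refine monotoneOn_of_hasDerivWithinAt_nonneg (convex_Icc 0 1)
    (fun p _ => (hasDerivAt_expC p f).continuousAt.continuousWithinAt)
    (fun p _ => (hasDerivAt_expC p f).hasDerivWithinAt) fun p hp => ?_
  exact Finset.sum_nonneg fun e _ => expC_nonneg (interior_subset hp) (edgeDiff_nonneg hf e)

end Expectation

section Variance

variable {E : Type*}

theorem sqNorm2_nonneg [Finite E] {p : ℝ} (hp : p ∈ Set.Icc (0 : ℝ) 1) (f : (E → Bool) → ℝ) :
    0 ≤ sqNorm2 p f :=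
  expC_nonneg hp fun x => sq_nonneg (f x)

theorem sqNorm2_eq_sqNorm2_edgeAvg_add [Finite E] (p : ℝ) (f : (E → Bool) → ℝ) (e : E) :
    sqNorm2 p f = sqNorm2 p (edgeAvg p f e) + p * (1 - p) * sqNorm2 p (edgeDiff f e) := by
  simp only [sqNorm2]
  rw [← expC_edgeAvg p (fun x => f x ^ 2) e, ← expC_const_mul, ← expC_add]
  congr 1
  funext x
  simp only [edgeAvg, edgeDiff]
  ring

theorem sqNorm2_edgeAvg_le [Finite E] {p : ℝ} (hp : p ∈ Set.Icc (0 : ℝ) 1) (f : (E → Bool) → ℝ)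
    (e : E) : sqNorm2 p (edgeAvg p f e) ≤ sqNorm2 p f := by
  rw [sqNorm2_eq_sqNorm2_edgeAvg_add p f e]
  exact le_add_of_nonneg_right
    (mul_nonneg (mul_nonneg hp.1 (sub_nonneg.2 hp.2)) (sqNorm2_nonneg hp _))

theorem varC_eq_varC_edgeAvg_add [Finite E] (p : ℝ) (f : (E → Bool) → ℝ) (e : E) :
    varC p f = varC p (edgeAvg p f e) + p * (1 - p) * sqNorm2 p (edgeDiff f e) := by
  have := sqNorm2_eq_sqNorm2_edgeAvg_add p f e
  simp only [varC, sqNorm2, expC_edgeAvg] at this ⊢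
  linarith

theorem varC_le_of_dependsOn [Finite E] {p : ℝ} (hp : p ∈ Set.Icc (0 : ℝ) 1)
    {f : (E → Bool) → ℝ} {S : Finset E} (hf : DependsOn f S) :
    varC p f ≤ p * (1 - p) * ∑ e ∈ S, sqNorm2 p (edgeDiff f e) := by
  classical
  have hp' : 0 ≤ p * (1 - p) := mul_nonneg hp.1 (sub_nonneg.2 hp.2)
  induction S using Finset.induction_on generalizing f with
  | empty =>
    rw [Finset.coe_empty] at hf
    have : f = fun _ => f fun _ => true := funext fun x => hf (by simp)
    rw [this]
    simp [varC, expC_const]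
  | insert e S he ih =>
    rw [Finset.coe_insert] at hf
    have avg_le : ∑ e' ∈ S, sqNorm2 p (edgeDiff (edgeAvg p f e) e')
        ≤ ∑ e' ∈ S, sqNorm2 p (edgeDiff f e') := by
      refine Finset.sum_le_sum fun e' he' => ?_
      rw [edgeDiff_edgeAvg_of_ne (by rintro rfl; exact he he')]
      exact sqNorm2_edgeAvg_le hp _ e
    rw [varC_eq_varC_edgeAvg_add p f e, Finset.sum_insert he, mul_add, add_comm]
    gcongr
    exact (ih (dependsOn_edgeAvg hf p)).trans (mul_le_mul_of_nonneg_left avg_le hp')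

theorem varC_le_sum_sqNorm2_edgeDiff [Fintype E] {p : ℝ} (hp : p ∈ Set.Icc (0 : ℝ) 1)
    (f : (E → Bool) → ℝ) :
    varC p f ≤ p * (1 - p) * ∑ e, sqNorm2 p (edgeDiff f e) :=
  varC_le_of_dependsOn hp fun x y h => by
    rw [funext fun e => h e (Finset.mem_coe.2 (Finset.mem_univ e))]

theorem varC_le_of_abs_edgeDiff_le [Finite E] {p : ℝ} (hp : p ∈ Set.Icc (0 : ℝ) 1)
    {f : (E → Bool) → ℝ} {k : ℝ} (hf : ∀ e x, |edgeDiff f e x| ≤ 2 * k) :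
    varC p f ≤ Nat.card E * k ^ 2 := by
  cases nonempty_fintype E
  have hp' : 0 ≤ p * (1 - p) := mul_nonneg hp.1 (sub_nonneg.2 hp.2)
  have diff_le (e : E) : sqNorm2 p (edgeDiff f e) ≤ (2 * k) ^ 2 :=
    (expC_mono hp fun x => sq_le_sq.2 ((hf e x).trans (le_abs_self _))).trans_eq (expC_const p _)
  calc varC p f ≤ p * (1 - p) * ∑ e, sqNorm2 p (edgeDiff f e) := varC_le_sum_sqNorm2_edgeDiff hp f
    _ ≤ p * (1 - p) * ∑ _e : E, (2 * k) ^ 2 := by gcongr with e; exact diff_le e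
    _ = 4 * (p * (1 - p)) * (Nat.card E * k ^ 2) := by
        rw [Finset.sum_const, Finset.card_univ, Nat.card_eq_fintype_card, nsmul_eq_mul]
        ring
    _ ≤ 1 * (Nat.card E * k ^ 2) := by
        gcongr
        nlinarith [sq_nonneg (2 * p - 1)]
    _ = Nat.card E * k ^ 2 := one_mul _

end Variance

section Probability

variable {E : Type*}

theorem probC_eq_expC_indicator (p : ℝ) (A : Set (E → Bool)) :
    probC p A = expC p (A.indicator 1) := by
  classical
  rw [probC, expC, finsum_mem_def]
  refine finsum_congr fun x => ?_
  by_cases hx : x ∈ A <;> simp [hx]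

variable [Finite E] {p : ℝ} {A B : Set (E → Bool)}

theorem probC_univ (p : ℝ) : probC p (Set.univ : Set (E → Bool)) = 1 := by
  rw [probC_eq_expC_indicator, Set.indicator_univ]
  exact expC_const p 1

theorem probC_le_add_of_subset_union {D : Set (E → Bool)} (hp : p ∈ Set.Icc (0 : ℝ) 1)
    (h : A ⊆ B ∪ D) : probC p A ≤ probC p B + probC p D := by
  simp only [probC_eq_expC_indicator, ← expC_add]
  refine expC_mono hp fun x => ?_
  by_cases hA : x ∈ A
  · rcases h hA with hB | hD
    · simp [hA, hB, Set.indicator_nonneg]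
    · simp [hA, hD, Set.indicator_nonneg]
  · simp only [Set.indicator_of_notMem hA]
    exact add_nonneg (Set.indicator_nonneg (fun _ _ => zero_le_one) x)
      (Set.indicator_nonneg (fun _ _ => zero_le_one) x)

theorem probC_monotoneOn (hA : IsUpperSet A) : MonotoneOn (fun p => probC p A) (Set.Icc 0 1) := by
  simp only [probC_eq_expC_indicator]
  refine expC_monotoneOn fun x y hxy => ?_
  by_cases hx : x ∈ A
  · simp [hx, hA hxy hx]
  · simpa [hx] using Set.indicator_nonneg (f := (1 : (E → Bool) → ℝ)) (fun _ _ => zero_le_one) y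

theorem mul_probC_le_expC (hp : p ∈ Set.Icc (0 : ℝ) 1) {f : (E → Bool) → ℝ} (hf : 0 ≤ f) {a : ℝ}
    (hA : ∀ x ∈ A, a ≤ f x) : a * probC p A ≤ expC p f := by
  rw [probC_eq_expC_indicator, ← expC_const_mul]
  refine expC_mono hp fun x => ?_
  by_cases hx : x ∈ A
  · simpa [hx] using hA x hx
  · simpa [hx] using hf x

theorem expC_sq_sub_expC (p : ℝ) (f : (E → Bool) → ℝ) :
    expC p (fun x => (f x - expC p f) ^ 2) = varC p f := by
  have (x : E → Bool) : (f x - expC p f) ^ 2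
      = (f x ^ 2 - 2 * expC p f * f x) + expC p f ^ 2 := by ring
  simp only [this]
  rw [expC_add, expC_sub, expC_const_mul, expC_const, varC]
  ring

theorem sq_mul_probC_le_varC (hp : p ∈ Set.Icc (0 : ℝ) 1) {f : (E → Bool) → ℝ} {s : ℝ}
    (hs : 0 ≤ s) (hA : ∀ x ∈ A, s ≤ |f x - expC p f|) : s ^ 2 * probC p A ≤ varC p f := by
  rw [← expC_sq_sub_expC]
  refine mul_probC_le_expC hp (fun x => sq_nonneg _) fun x hx => ?_
  rw [← sq_abs (f x - _)]
  exact pow_le_pow_left₀ hs (hA x hx) 2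

theorem expC_lt_add_of_varC_lt (hp : p ∈ Set.Icc (0 : ℝ) 1) {f : (E → Bool) → ℝ} {m s : ℝ}
    (hs : 0 ≤ s) (hA : ∀ x ∈ A, f x ≤ m) (hvar : varC p f < s ^ 2 * probC p A) :
    expC p f < m + s := by
  by_contra! h
  refine hvar.not_ge (sq_mul_probC_le_varC hp hs fun x hx => ?_)
  rw [abs_sub_comm]
  exact le_trans (by linarith [hA x hx]) (le_abs_self _)

theorem sub_lt_expC_of_varC_lt (hp : p ∈ Set.Icc (0 : ℝ) 1) {f : (E → Bool) → ℝ} {m s : ℝ}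
    (hs : 0 ≤ s) (hA : ∀ x ∈ A, m ≤ f x) (hvar : varC p f < s ^ 2 * probC p A) :
    m - s < expC p f := by
  by_contra! h
  refine hvar.not_ge (sq_mul_probC_le_varC hp hs fun x hx => ?_)
  exact le_trans (by linarith [hA x hx]) (le_abs_self _)

end Probability

/-! ### Percolation clusters -/

section Clusters

variable {V : Type*} {G : SimpleGraph V} {x y : G.edgeSet → Bool} {u v w : V}

theorem percoGraph_adj : (percoGraph G x).Adj u v ↔ ∃ h : G.Adj u v, x ⟨s(u, v), h⟩ = true := by
  rw [percoGraph, SimpleGraph.fromEdgeSet_adj]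
  exact ⟨fun h => h.1, fun h => ⟨h, h.1.ne⟩⟩

theorem percoGraph_mono (h : x ≤ y) : percoGraph G x ≤ percoGraph G y := by
  intro u v huv
  obtain ⟨hG, hx⟩ := percoGraph_adj.1 huv
  exact percoGraph_adj.2 ⟨hG, h _ hx⟩

theorem percoComp_mono (h : x ≤ y) (v : V) : percoComp G x v ⊆ percoComp G y v :=
  fun _ hu => hu.mono (percoGraph_mono h)

theorem mem_percoComp_self (x : G.edgeSet → Bool) (v : V) : v ∈ percoComp G x v :=
  SimpleGraph.Reachable.refl v

theorem mem_percoComp_comm : u ∈ percoComp G x v ↔ v ∈ percoComp G x u :=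
  ⟨SimpleGraph.Reachable.symm, SimpleGraph.Reachable.symm⟩

theorem percoComp_eq_of_mem (h : u ∈ percoComp G x v) : percoComp G x u = percoComp G x v :=
  Set.ext fun _ => ⟨h.trans, h.symm.trans⟩

theorem disjoint_percoComp (h : v ∉ percoComp G x u) :
    Disjoint (percoComp G x u) (percoComp G x v) :=
  Set.disjoint_left.2 fun _ hu hv => h (hu.trans hv.symm)

theorem mem_percoComp_setEdge_true (h : G.Adj u v) (x : G.edgeSet → Bool) :
    v ∈ percoComp G (setEdge x ⟨s(u, v), h⟩ true) u :=
  (percoGraph_adj.2 ⟨h, setEdge_apply_self x _ true⟩).reachable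

theorem percoComp_subset_of_closed {S : Set V} (hv : v ∈ S)
    (hS : ∀ a ∈ S, ∀ b, (percoGraph G x).Adj a b → b ∈ S) : percoComp G x v ⊆ S := by
  rintro u ⟨walk⟩
  induction walk with
  | nil => exact hv
  | cons hadj _ ih => exact ih (hS _ hv _ hadj)

theorem percoComp_setEdge_eq (h : G.Adj u v) (hu : w ∉ percoComp G (setEdge x ⟨s(u, v), h⟩ false) u)
    (hv : w ∉ percoComp G (setEdge x ⟨s(u, v), h⟩ false) v) :
    percoComp G (setEdge x ⟨s(u, v), h⟩ true) w
      = percoComp G (setEdge x ⟨s(u, v), h⟩ false) w := by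
  set e : G.edgeSet := ⟨s(u, v), h⟩
  refine Set.Subset.antisymm (percoComp_subset_of_closed (mem_percoComp_self _ w) ?_)
    (percoComp_mono ((setEdge_false_le x e).trans (le_setEdge_true x e)) w)
  intro a ha a' haa'
  obtain ⟨hadj, hopen⟩ := percoGraph_adj.1 haa'
  by_cases he : (⟨s(a, a'), hadj⟩ : G.edgeSet) = e
  · have : s(a, a') = s(u, v) := congrArg Subtype.val he
    rcases Sym2.eq_iff.1 this with ⟨rfl, -⟩ | ⟨rfl, -⟩
    · exact absurd (mem_percoComp_comm.1 ha) hu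
    · exact absurd (mem_percoComp_comm.1 ha) hv
  · have : (percoGraph G (setEdge x e false)).Adj a a' := by
      refine percoGraph_adj.2 ⟨hadj, ?_⟩
      rwa [setEdge_apply_of_ne he] at hopen ⊢
    exact ha.trans this.reachable

theorem compSize_eq_of_mem (h : u ∈ percoComp G x v) : compSize G x u = compSize G x v :=
  congrArg Set.ncard (percoComp_eq_of_mem h)

variable [Finite V]

theorem compSize_pos (x : G.edgeSet → Bool) (v : V) : 0 < compSize G x v :=
  (Set.ncard_pos).2 ⟨v, mem_percoComp_self x v⟩

theorem compSize_mono (h : x ≤ y) (v : V) : compSize G x v ≤ compSize G y v :=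
  Set.ncard_le_ncard (percoComp_mono h v)

theorem compSize_le_largestComp (x : G.edgeSet → Bool) (v : V) :
    compSize G x v ≤ largestComp G x :=
  le_csSup (Set.finite_range _).bddAbove ⟨v, rfl⟩

theorem exists_compSize_eq_largestComp [Nonempty V] (x : G.edgeSet → Bool) :
    ∃ v, compSize G x v = largestComp G x :=
  Nat.sSup_mem (Set.range_nonempty _) (Set.finite_range _).bddAbove

theorem largestComp_mono (h : x ≤ y) : largestComp G x ≤ largestComp G y := by
  refine csSup_le' ?_
  rintro _ ⟨v, rfl⟩
  exact (compSize_mono h v).trans (compSize_le_largestComp y v)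

end Clusters

/-! ### The truncated mass of the large clusters -/

open scoped Classical in
theorem card_filter_mem {V : Type*} [Fintype V] (S : Set V) :
    (Finset.univ.filter (· ∈ S)).card = S.ncard := by
  rw [Set.filter_mem_univ_eq_toFinset, Set.ncard_eq_toFinset_card']

/-- The mass that the vertex `v` misses in `largeMass`: a cluster of size `s` misses `min s k`,
spread evenly over its vertices. -/
def deficit {V : Type*} (k : ℝ) (G : SimpleGraph V) (x : G.edgeSet → Bool) (v : V) : ℝ :=
  min 1 (k / compSize G x v)

/-- The sum of `max 0 (s - k)` over the clusters, `s` being the size of the cluster: a Lipschitz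
substitute for the number of vertices in clusters larger than `k`. -/
def largeMass {V : Type*} [Fintype V] (k : ℝ) (G : SimpleGraph V) (x : G.edgeSet → Bool) : ℝ :=
  ∑ v, (1 - deficit k G x v)

section LargeMass

open scoped Classical

variable {V : Type*} {G : SimpleGraph V} {x y : G.edgeSet → Bool} {u v : V} {k : ℝ}

theorem deficit_le_one (k : ℝ) (x : G.edgeSet → Bool) (v : V) : deficit k G x v ≤ 1 :=
  min_le_left _ _

theorem deficit_nonneg (hk : 0 ≤ k) (x : G.edgeSet → Bool) (v : V) : 0 ≤ deficit k G x v :=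
  le_min zero_le_one (by positivity)

theorem deficit_anti [Finite V] (hk : 0 ≤ k) (h : x ≤ y) (v : V) :
    deficit k G y v ≤ deficit k G x v := by
  have := compSize_pos x v
  have := compSize_mono h v
  unfold deficit
  gcongr

variable [Fintype V]

theorem sum_percoComp_const (x : G.edgeSet → Bool) (u : V) (a : ℝ) :
    ∑ v with v ∈ percoComp G x u, a = compSize G x u * a := by
  rw [Finset.sum_const, card_filter_mem, nsmul_eq_mul, compSize]

theorem sum_percoComp_deficit (k : ℝ) (x : G.edgeSet → Bool) (u : V) :
    ∑ v with v ∈ percoComp G x u, deficit k G x v = min (compSize G x u : ℝ) k := by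
  have hpos : (0 : ℝ) < compSize G x u := Nat.cast_pos.2 (compSize_pos x u)
  have deficit_eq : ∀ v ∈ Finset.univ.filter (· ∈ percoComp G x u),
      deficit k G x v = min 1 (k / compSize G x u) := fun v hv => by
    rw [deficit, compSize_eq_of_mem (Finset.mem_filter.1 hv).2]
  rw [Finset.sum_congr rfl deficit_eq, sum_percoComp_const, mul_min_of_nonneg _ _ hpos.le, mul_one,
    mul_div_cancel₀ _ hpos.ne']

theorem largeMass_sub_largeMass (k : ℝ) (x y : G.edgeSet → Bool) :
    largeMass k G y - largeMass k G x = ∑ v, (deficit k G x v - deficit k G y v) := by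
  rw [largeMass, largeMass, ← Finset.sum_sub_distrib]
  simp only [sub_sub_sub_cancel_left]

theorem largeMass_mono (hk : 0 ≤ k) : Monotone (largeMass k G) := fun _ _ h =>
  Finset.sum_le_sum fun v _ => sub_le_sub_left (deficit_anti hk h v) 1

theorem largeMass_nonneg (k : ℝ) (x : G.edgeSet → Bool) : 0 ≤ largeMass k G x :=
  Finset.sum_nonneg fun v _ => sub_nonneg.2 (deficit_le_one k x v)

theorem largeMass_le_ncard (hk : 0 ≤ k) (x : G.edgeSet → Bool) :
    largeMass k G x ≤ {v | k ≤ compSize G x v}.ncard := by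
  rw [← card_filter_mem, Finset.card_filter, Nat.cast_sum]
  refine Finset.sum_le_sum fun v _ => ?_
  by_cases h : k ≤ compSize G x v
  · simpa [h] using deficit_nonneg hk x v
  · have hpos : (0 : ℝ) < compSize G x v := Nat.cast_pos.2 (compSize_pos x v)
    have : deficit k G x v = 1 := min_eq_left ((one_le_div hpos).2 (not_le.1 h).le)
    simp [h, this]

theorem largeMass_le_card (hk : 0 ≤ k) (x : G.edgeSet → Bool) : largeMass k G x ≤ Nat.card V :=
  (largeMass_le_ncard hk x).trans (mod_cast Set.ncard_le_card _)

theorem compSize_sub_le_largeMass (k : ℝ) (x : G.edgeSet → Bool) (u : V) :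
    compSize G x u - k ≤ largeMass k G x :=
  calc (compSize G x u : ℝ) - k
      ≤ compSize G x u - min (compSize G x u : ℝ) k := sub_le_sub_left (min_le_right _ _) _
    _ = ∑ v with v ∈ percoComp G x u, (1 - deficit k G x v) := by
        rw [Finset.sum_sub_distrib, sum_percoComp_deficit, sum_percoComp_const, mul_one]
    _ ≤ largeMass k G x :=
        Finset.sum_le_sum_of_subset_of_nonneg (Finset.filter_subset _ _)
          fun v _ _ => sub_nonneg.2 (deficit_le_one k x v)

/-- The merged cluster misses no more mass than the larger of the two did before, so what the
smaller one missed is gained. -/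
theorem min_compSize_le_largeMass_sub (hk : 0 ≤ k) (hxy : x ≤ y) (hvy : v ∈ percoComp G y u)
    (hvx : v ∉ percoComp G x u) (hu : k ≤ compSize G x u) :
    min (compSize G x v : ℝ) k ≤ largeMass k G y - largeMass k G x := by
  have sub : Finset.univ.filter (· ∈ percoComp G x u) ∪ Finset.univ.filter (· ∈ percoComp G x v)
      ⊆ Finset.univ.filter (· ∈ percoComp G y u) := by
    rw [← Finset.filter_or]
    refine Finset.monotone_filter_right _ fun w _ => ?_
    rintro (hw | hw)
    exacts [percoComp_mono hxy u hw, hvy.trans (percoComp_mono hxy v hw)]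
  have disj : Disjoint (Finset.univ.filter (· ∈ percoComp G x u))
      (Finset.univ.filter (· ∈ percoComp G x v)) :=
    Finset.disjoint_filter.2 fun w _ hw => Set.disjoint_left.1 (disjoint_percoComp hvx) hw
  have deficit_before : min (compSize G x u : ℝ) k + min (compSize G x v : ℝ) k
      ≤ ∑ w with w ∈ percoComp G y u, deficit k G x w := by
    rw [← sum_percoComp_deficit, ← sum_percoComp_deficit, ← Finset.sum_union disj]
    exact Finset.sum_le_sum_of_subset_of_nonneg sub fun w _ _ => deficit_nonneg hk x w
  have deficit_after : ∑ w with w ∈ percoComp G y u, deficit k G y w ≤ k :=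
    (sum_percoComp_deficit k y u).trans_le (min_le_right _ _)
  calc min (compSize G x v : ℝ) k
      ≤ ∑ w with w ∈ percoComp G y u, (deficit k G x w - deficit k G y w) := by
        rw [min_eq_right hu] at deficit_before
        rw [Finset.sum_sub_distrib]
        linarith
    _ ≤ ∑ w, (deficit k G x w - deficit k G y w) :=
        Finset.sum_le_sum_of_subset_of_nonneg (Finset.filter_subset _ _)
          fun w _ _ => sub_nonneg.2 (deficit_anti hk hxy w)
    _ = largeMass k G y - largeMass k G x := (largeMass_sub_largeMass k x y).symm

theorem edgeDiff_largeMass_le (hk : 0 ≤ k) (e : G.edgeSet) (x : G.edgeSet → Bool) :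
    edgeDiff (largeMass k G) e x ≤ 2 * k := by
  obtain ⟨⟨u, v⟩, h⟩ := e
  set e : G.edgeSet := ⟨s(u, v), h⟩
  set x₀ := setEdge x e false
  have pointwise (w : V) : deficit k G x₀ w - deficit k G (setEdge x e true) w
      ≤ (if w ∈ percoComp G x₀ u then deficit k G x₀ w else 0)
        + if w ∈ percoComp G x₀ v then deficit k G x₀ w else 0 := by
    have nonneg := deficit_nonneg hk x₀ w
    have nonneg' := deficit_nonneg hk (setEdge x e true) w
    by_cases hu : w ∈ percoComp G x₀ u
    · rw [if_pos hu]
      split_ifs <;> linarith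
    by_cases hv : w ∈ percoComp G x₀ v
    · rw [if_pos hv, if_neg hu]
      linarith
    · rw [if_neg hu, if_neg hv, deficit, deficit, compSize, compSize, percoComp_setEdge_eq h hu hv]
      simp [x₀, e]
  calc edgeDiff (largeMass k G) e x
      = ∑ w, (deficit k G x₀ w - deficit k G (setEdge x e true) w) :=
        largeMass_sub_largeMass k x₀ _
    _ ≤ _ := Finset.sum_le_sum fun w _ => pointwise w
    _ = min (compSize G x₀ u : ℝ) k + min (compSize G x₀ v : ℝ) k := by
        rw [Finset.sum_add_distrib, ← Finset.sum_filter, ← Finset.sum_filter,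
          sum_percoComp_deficit, sum_percoComp_deficit]
    _ ≤ 2 * k := by
        linarith [min_le_right (compSize G x₀ u : ℝ) k, min_le_right (compSize G x₀ v : ℝ) k]

theorem one_le_edgeDiff_largeMass (hk : 1 ≤ k) (h : G.Adj u v) (hv : v ∉ percoComp G x u)
    (hu : k ≤ compSize G x u) : 1 ≤ edgeDiff (largeMass k G) ⟨s(u, v), h⟩ x := by
  have hk₀ : 0 ≤ k := zero_le_one.trans hk
  calc (1 : ℝ) ≤ min (compSize G x v : ℝ) k := le_min (mod_cast compSize_pos x v) hk
    _ ≤ _ := min_compSize_le_largeMass_sub hk₀ (le_setEdge_true x ⟨s(u, v), h⟩)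
        (mem_percoComp_setEdge_true h x) hv hu
    _ ≤ _ := sub_le_edgeDiff (largeMass_mono hk₀) _ x

end LargeMass

/-! ### Degrees, boundaries and the growth of the large mass -/

section Boundary

variable {V : Type*} {G : SimpleGraph V}

theorem DegreeLE.mono {d d' : ℕ} (hd : DegreeLE G d)
    (h : d ≤ d') : DegreeLE G d' :=
  fun v => (hd v).trans h

theorem edgeBoundaryCard_compl (S : Set V) : edgeBoundaryCard G Sᶜ = edgeBoundaryCard G S := by
  rw [edgeBoundaryCard, edgeBoundaryCard, ← Set.ncard_image_of_injective _ Prod.swap_injective]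
  congr 1
  ext ⟨u, v⟩
  simp [Set.image_swap_eq_preimage_swap, G.adj_comm, and_comm]

theorem CheegerGT.mul_ncard_mul_ncard_compl_le [Finite V] {b : ℝ} (hb : 0 ≤ b)
    (hG : CheegerGT G b) (S : Set V) :
    b * (S.ncard * Sᶜ.ncard) ≤ Nat.card V * edgeBoundaryCard G S := by
  have card_add : S.ncard + Sᶜ.ncard = Nat.card V := Set.ncard_add_ncard_compl S
  have of_le (T : Set V) (hT : 2 * T.ncard ≤ Nat.card V) :
      b * (T.ncard * Tᶜ.ncard) ≤ Nat.card V * edgeBoundaryCard G T := by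
    rcases Nat.eq_zero_or_pos T.ncard with h | h
    · rw [h, Nat.cast_zero, zero_mul, mul_zero]
      positivity
    · rw [← mul_assoc, mul_comm]
      gcongr
      exacts [Set.ncard_le_card _, (hG T h hT).le]
  rcases le_total (2 * S.ncard) (Nat.card V) with h | h
  · exact of_le S h
  · have := of_le Sᶜ (by omega)
    rwa [compl_compl, edgeBoundaryCard_compl, mul_comm (Sᶜ.ncard : ℝ)] at this

end Boundary

section Darts

open scoped Classical

variable {V : Type*} [Fintype V] {G : SimpleGraph V}

theorem sum_dartOfNeighborSet (f : G.Dart → ℝ) :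
    ∑ v, ∑ u : G.neighborSet v, f (G.dartOfNeighborSet v u) = ∑ a, f a := by
  rw [← Fintype.sum_sigma']
  exact Fintype.sum_equiv ⟨fun q => G.dartOfNeighborSet q.1 q.2, fun a => ⟨a.fst, a.snd, a.adj⟩,
    fun _ => rfl, fun _ => rfl⟩ _ _ fun _ => rfl

theorem sum_dart_edge (f : G.edgeSet → ℝ) :
    ∑ a : G.Dart, f ⟨a.edge, a.edge_mem⟩ = 2 * ∑ e, f e := by
  rw [← Finset.sum_fiberwise (g := fun a : G.Dart => (⟨a.edge, a.edge_mem⟩ : G.edgeSet)),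
    Finset.mul_sum]
  refine Finset.sum_congr rfl fun e _ => ?_
  have fiber_card := G.dart_edge_fiber_card e.1 e.2
  rw [Finset.sum_congr rfl fun a ha => congrArg f (Finset.mem_filter.1 ha).2, Finset.sum_const,
    nsmul_eq_mul]
  simp only [Subtype.ext_iff, fiber_card, Nat.cast_ofNat]

theorem sum_dart_symm (f : G.Dart → ℝ) : ∑ a : G.Dart, f a.symm = ∑ a, f a :=
  SimpleGraph.Dart.symm_involutive.bijective.sum_comp f

theorem DegreeLE.degree_le {d : ℕ} (hd : DegreeLE G d) (v : V) : G.degree v ≤ d := by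
  rw [← G.card_neighborSet_eq_degree, ← Nat.card_eq_fintype_card]
  exact hd v

theorem DegreeLE.sum_dart_fst_le {d : ℕ} (hd : DegreeLE G d) {f : V → ℝ} (hf : 0 ≤ f) :
    ∑ a : G.Dart, f a.fst ≤ d * ∑ v, f v := by
  rw [← sum_dartOfNeighborSet, Finset.mul_sum]
  refine Finset.sum_le_sum fun v _ => ?_
  change ∑ _u : G.neighborSet v, f v ≤ d * f v
  rw [Finset.sum_const, Finset.card_univ, G.card_neighborSet_eq_degree, nsmul_eq_mul]
  exact mul_le_mul_of_nonneg_right (mod_cast hd.degree_le v) (hf v)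

theorem edgeBoundaryCard_eq_card_dart (S : Set V) :
    edgeBoundaryCard G S = (Finset.univ.filter fun a : G.Dart => a.fst ∈ S ∧ a.snd ∉ S).card := by
  rw [edgeBoundaryCard, ← Finset.card_map ⟨_, SimpleGraph.Dart.toProd_injective⟩,
    ← Set.ncard_coe_finset]
  congr 1
  ext q
  simp only [Set.mem_ofPred_eq, Finset.coe_map, Finset.coe_filter, Finset.mem_univ, true_and,
    Set.mem_image, Function.Embedding.coeFn_mk]
  exact ⟨fun h => ⟨⟨q, h.1⟩, h.2, rfl⟩, by rintro ⟨a, ha, rfl⟩; exact ⟨a.adj, ha⟩⟩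

end Darts

theorem DegreeLE.two_mul_card_edgeSet_le {V : Type*} [Finite V] {G : SimpleGraph V} {d : ℕ}
    (hd : DegreeLE G d) :
    (2 * Nat.card G.edgeSet : ℝ) ≤ d * Nat.card V := by
  classical
  have := Fintype.ofFinite V
  have := hd.sum_dart_fst_le (f := 1) zero_le_one
  simpa [sum_dart_edge (fun _ => 1), Nat.card_eq_fintype_card] using
    (sum_dart_edge (G := G) fun _ => 1).symm.trans_le this

section Growth

open scoped Classical

variable {V : Type*} [Fintype V] {G : SimpleGraph V} {b k : ℝ} {d : ℕ}

theorem varC_largeMass_le {p : ℝ} (hp : p ∈ Set.Icc (0 : ℝ) 1) (hd : DegreeLE G d) (hk : 0 ≤ k) :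
    varC p (largeMass k G) ≤ d * Nat.card V * k ^ 2 := by
  refine (varC_le_of_abs_edgeDiff_le hp fun e x => ?_).trans
    (mul_le_mul_of_nonneg_right (b := (Nat.card G.edgeSet : ℝ)) ?_ (sq_nonneg k))
  · rw [abs_of_nonneg (edgeDiff_nonneg (largeMass_mono hk) e x)]
    exact edgeDiff_largeMass_le hk e x
  · linarith [hd.two_mul_card_edgeSet_le, Nat.cast_nonneg (α := ℝ) (Nat.card G.edgeSet)]

theorem sum_inv_compSize_mul_sum {ι : Type*} [Fintype ι] (x : G.edgeSet → Bool) (φ : ι → V)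
    (f : ι → ℝ) :
    ∑ w, (compSize G x w : ℝ)⁻¹ * ∑ i with φ i ∈ percoComp G x w, f i = ∑ i, f i := by
  simp only [Finset.sum_filter, Finset.mul_sum]
  rw [Finset.sum_comm]
  refine Finset.sum_congr rfl fun i _ => ?_
  have summand (w : V) : (compSize G x w : ℝ)⁻¹ * (if φ i ∈ percoComp G x w then f i else 0)
      = if w ∈ percoComp G x (φ i) then (compSize G x (φ i) : ℝ)⁻¹ * f i else 0 := by
    rw [mem_percoComp_comm]
    split_ifs with h
    · rw [compSize_eq_of_mem h]
    · rw [mul_zero]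
  have hne : (compSize G x (φ i) : ℝ) ≠ 0 := Nat.cast_ne_zero.2 (compSize_pos x _).ne'
  simp only [summand]
  rw [← Finset.sum_filter, sum_percoComp_const, mul_inv_cancel_left₀ hne]

theorem edgeBoundaryCard_percoComp_le (hk : 1 ≤ k) {x : G.edgeSet → Bool} {w : V}
    (hw : k ≤ compSize G x w) :
    (edgeBoundaryCard G (percoComp G x w) : ℝ) ≤
      ∑ a : G.Dart with a.fst ∈ percoComp G x w,
        edgeDiff (largeMass k G) ⟨a.edge, a.edge_mem⟩ x := by
  rw [edgeBoundaryCard_eq_card_dart, ← Finset.filter_filter, Finset.card_filter, Nat.cast_sum]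
  refine Finset.sum_le_sum fun a ha => ?_
  have hfst : a.fst ∈ percoComp G x w := (Finset.mem_filter.1 ha).2
  split_ifs with hsnd
  · simpa using edgeDiff_nonneg (largeMass_mono (zero_le_one.trans hk)) _ x
  · rw [← percoComp_eq_of_mem hfst] at hsnd
    rw [← compSize_eq_of_mem hfst] at hw
    exact_mod_cast one_le_edgeDiff_largeMass hk a.adj hsnd hw

theorem CheegerGT.mul_one_sub_deficit_le (hb : 0 ≤ b) (hG : CheegerGT G b) (hk : 1 ≤ k)
    (x : G.edgeSet → Bool) (w : V) :
    b * ((1 - deficit k G x w) * (Nat.card V - largeMass k G x - k)) ≤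
      Nat.card V * ((compSize G x w : ℝ)⁻¹ * ∑ a : G.Dart with a.fst ∈ percoComp G x w,
        edgeDiff (largeMass k G) ⟨a.edge, a.edge_mem⟩ x) := by
  have hk₀ : 0 ≤ k := zero_le_one.trans hk
  set s : ℝ := (compSize G x w : ℝ) with hs
  have s_pos : 0 < s := Nat.cast_pos.2 (compSize_pos x w)
  rcases lt_or_ge s k with h | h
  · have : deficit k G x w = 1 := min_eq_left ((one_le_div s_pos).2 h.le)
    rw [this, sub_self, zero_mul, mul_zero]
    exact mul_nonneg (Nat.cast_nonneg _) (mul_nonneg (inv_nonneg.2 s_pos.le)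
      (Finset.sum_nonneg fun a _ => edgeDiff_nonneg (largeMass_mono hk₀) _ x))
  have compl_card : ((percoComp G x w)ᶜ.ncard : ℝ) = Nat.card V - s := by
    rw [hs, ← Set.ncard_add_ncard_compl (percoComp G x w), compSize, Nat.cast_add,
      add_sub_cancel_left]
  have compl_nonneg : 0 ≤ Nat.card V - s := compl_card ▸ Nat.cast_nonneg _
  calc b * ((1 - deficit k G x w) * (Nat.card V - largeMass k G x - k))
      ≤ b * (1 * (Nat.card V - s)) := by
        gcongr b * ?_
        have h0 := sub_nonneg.2 (deficit_le_one k x w)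
        exact (mul_le_mul_of_nonneg_left (by linarith [compSize_sub_le_largeMass k x w]) h0).trans
          (mul_le_mul_of_nonneg_right (sub_le_self 1 (deficit_nonneg hk₀ x w)) compl_nonneg)
    _ = s⁻¹ * (b * (s * (percoComp G x w)ᶜ.ncard)) := by
        rw [compl_card]
        field_simp
    _ ≤ s⁻¹ * (Nat.card V * edgeBoundaryCard G (percoComp G x w)) := by
        gcongr s⁻¹ * ?_
        exact hG.mul_ncard_mul_ncard_compl_le hb _
    _ ≤ _ := by
        rw [mul_left_comm]
        gcongr
        exact edgeBoundaryCard_percoComp_le hk h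

/-- Every large cluster has a boundary of order of its size, and each of its boundary edges
contributes to the derivative; averaging over the clusters gives a logistic inequality. -/
theorem CheegerGT.mul_largeMass_le_sum_edgeDiff (hb : 0 ≤ b) (hG : CheegerGT G b) (hk : 1 ≤ k)
    (x : G.edgeSet → Bool) :
    b * (largeMass k G x * (Nat.card V - largeMass k G x - k)) ≤
      2 * Nat.card V * ∑ e, edgeDiff (largeMass k G) e x := by
  have := Finset.sum_le_sum fun w (_ : w ∈ Finset.univ) => hG.mul_one_sub_deficit_le hb hk x w
  rw [← Finset.mul_sum, ← Finset.sum_mul, ← Finset.mul_sum, sum_inv_compSize_mul_sum,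
    sum_dart_edge fun e => edgeDiff (largeMass k G) e x] at this
  rwa [mul_comm (2 : ℝ), mul_assoc]

theorem CheegerGT.expC_largeMass_le_sum_edgeDiff {p : ℝ} (hp : p ∈ Set.Icc (0 : ℝ) 1) (hb : 0 ≤ b)
    (hd : DegreeLE G d) (hG : CheegerGT G b) (hk : 1 ≤ k) :
    b * (expC p (largeMass k G) * (Nat.card V - expC p (largeMass k G))
        - (k + d * k ^ 2) * Nat.card V) ≤
      2 * Nat.card V * ∑ e, expC p (edgeDiff (largeMass k G) e) := by
  have hk₀ : 0 ≤ k := zero_le_one.trans hk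
  set N : ℝ := (Nat.card V : ℝ)
  set Φ := largeMass k G
  have mean_square : expC p (fun x => Φ x ^ 2) ≤ d * N * k ^ 2 + expC p Φ ^ 2 :=
    sub_le_iff_le_add.1 (varC_largeMass_le hp hd hk₀)
  have mean_le : expC p Φ ≤ N :=
    (expC_mono hp fun x => largeMass_le_card hk₀ x).trans_eq (expC_const p N)
  calc b * (expC p Φ * (N - expC p Φ) - (k + d * k ^ 2) * N)
      ≤ b * ((N - k) * expC p Φ - expC p fun x => Φ x ^ 2) := by
        gcongr b * ?_
        linarith [mul_le_mul_of_nonneg_left mean_le hk₀]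
    _ = expC p fun x => b * (Φ x * (N - Φ x - k)) := by
        rw [← expC_const_mul, ← expC_sub, ← expC_const_mul]
        congr 1
        funext x
        ring
    _ ≤ expC p fun x => 2 * N * ∑ e, edgeDiff Φ e x :=
        expC_mono hp fun x => hG.mul_largeMass_le_sum_edgeDiff hb hk x
    _ = 2 * N * ∑ e, expC p (edgeDiff Φ e) := by
        rw [expC_const_mul, expC_sum]

end Growth

/-! ### Short paths between large sets -/

/-- The vertices at distance at most `r` from the set `S`. -/
def nbhd {V : Type*} (G : SimpleGraph V) (r : ℕ) (S : Set V) : Set V :=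
  {v | ∃ u ∈ S, ∃ w : G.Walk u v, w.length ≤ r}

section Expansion

variable {V : Type*} {G : SimpleGraph V} {S T : Set V} {b t : ℝ} {d r : ℕ}

theorem subset_nbhd (r : ℕ) (S : Set V) : S ⊆ nbhd G r S :=
  fun u hu => ⟨u, hu, .nil, r.zero_le⟩

theorem nbhd_subset_succ (r : ℕ) (S : Set V) : nbhd G r S ⊆ nbhd G (r + 1) S :=
  fun _ ⟨u, hu, w, hw⟩ => ⟨u, hu, w, hw.trans r.le_succ⟩

theorem mem_nbhd_succ_of_adj {u v : V} (hu : u ∈ nbhd G r S) (h : G.Adj u v) :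
    v ∈ nbhd G (r + 1) S := by
  obtain ⟨z, hz, w, hw⟩ := hu
  exact ⟨z, hz, w.concat h, by rw [SimpleGraph.Walk.length_concat]; omega⟩

variable [Finite V]

theorem DegreeLE.edgeBoundaryCard_le_mul_ncard_diff (hd : DegreeLE G d)
    (hT : ∀ u ∈ S, ∀ v, G.Adj u v → v ∈ T) :
    (edgeBoundaryCard G S : ℝ) ≤ d * (T \ S).ncard := by
  classical
  have := Fintype.ofFinite V
  calc (edgeBoundaryCard G S : ℝ)
      = ∑ a : G.Dart, if a.fst ∈ S ∧ a.snd ∉ S then 1 else 0 := by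
        rw [edgeBoundaryCard_eq_card_dart, Finset.sum_boole]
    _ ≤ ∑ a : G.Dart, if a.snd ∈ T \ S then 1 else 0 := by
        refine Finset.sum_le_sum fun a _ => ?_
        split_ifs with h h' <;> try norm_num
        exact h' ⟨hT _ h.1 _ a.adj, h.2⟩
    _ = ∑ a : G.Dart, if a.fst ∈ T \ S then 1 else 0 :=
        sum_dart_symm fun a : G.Dart => if a.fst ∈ T \ S then (1 : ℝ) else 0
    _ ≤ d * ∑ v, if v ∈ T \ S then 1 else 0 :=
        hd.sum_dart_fst_le (f := fun v => if v ∈ T \ S then 1 else 0) fun v => by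
          dsimp only; split_ifs <;> norm_num
    _ = d * (T \ S).ncard := by
        rw [Finset.sum_boole, ← card_filter_mem]
        congr!

theorem CheegerGT.mul_ncard_nbhd_le (hG : CheegerGT G b) (hd : DegreeLE G d) (hd0 : 0 < d)
    (hS : S.Nonempty) (h : 2 * (nbhd G r S).ncard ≤ Nat.card V) :
    (1 + b / d) * (nbhd G r S).ncard ≤ (nbhd G (r + 1) S).ncard := by
  have boundary_lt := hG _ ((Set.ncard_pos (Set.toFinite _)).2 (hS.mono (subset_nbhd r S))) h
  have boundary_le := hd.edgeBoundaryCard_le_mul_ncard_diff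
    fun u (hu : u ∈ nbhd G r S) v => mem_nbhd_succ_of_adj hu
  rw [Set.cast_ncard_sdiff (nbhd_subset_succ r S) (Set.toFinite _)] at boundary_le
  have : b / d * (nbhd G r S).ncard ≤ (nbhd G (r + 1) S).ncard - (nbhd G r S).ncard := by
    rw [div_mul_eq_mul_div, div_le_iff₀ (by positivity)]
    linarith
  linarith

theorem CheegerGT.card_lt_two_mul_ncard_nbhd (hG : CheegerGT G b) (hb : 0 ≤ b)
    (hd : DegreeLE G d) (hd0 : 0 < d) (hS : S.Nonempty) (ht : t ≤ S.ncard)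
    (hr : Nat.card V < 2 * ((1 + b / d) ^ r * t)) : Nat.card V < 2 * (nbhd G r S).ncard := by
  by_contra! h
  have growth (s : ℕ) (hs : s ≤ r) : (1 + b / d) ^ s * t ≤ (nbhd G s S).ncard := by
    induction s with
    | zero =>
      rw [pow_zero, one_mul]
      exact ht.trans (mod_cast Set.ncard_le_ncard (subset_nbhd 0 S))
    | succ s ih =>
      have nbhd_le : (nbhd G s S).ncard ≤ (nbhd G r S).ncard :=
        Set.ncard_le_ncard fun _ ⟨u, hu, w, hw⟩ => ⟨u, hu, w, by omega⟩
      calc (1 + b / d) ^ (s + 1) * t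
          = (1 + b / d) * ((1 + b / d) ^ s * t) := by rw [pow_succ']; ring
        _ ≤ (1 + b / d) * (nbhd G s S).ncard := by gcongr; exact ih (by omega)
        _ ≤ (nbhd G (s + 1) S).ncard := hG.mul_ncard_nbhd_le hd hd0 hS (by omega)
  have : (2 * (nbhd G r S).ncard : ℝ) ≤ Nat.card V := mod_cast h
  linarith [growth r le_rfl]

theorem CheegerGT.exists_walk_length_le (hG : CheegerGT G b) (hb : 0 ≤ b) (hd : DegreeLE G d)
    (hd0 : 0 < d) (ht0 : 0 < t) (hS : t ≤ S.ncard) (hT : t ≤ T.ncard)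
    (hr : Nat.card V < 2 * ((1 + b / d) ^ r * t)) :
    ∃ u ∈ S, ∃ v ∈ T, ∃ w : G.Walk u v, w.length ≤ 2 * r := by
  have nonempty {S : Set V} (hS : t ≤ S.ncard) : S.Nonempty :=
    Set.nonempty_of_ncard_ne_zero (Nat.cast_pos.1 (ht0.trans_le hS)).ne'
  have majority {S : Set V} (hS : t ≤ S.ncard) : Nat.card V < 2 * (nbhd G r S).ncard :=
    hG.card_lt_two_mul_ncard_nbhd hb hd hd0 (nonempty hS) hS hr
  have not_disjoint : ¬ Disjoint (nbhd G r S) (nbhd G r T) := fun h => by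
    have := Set.ncard_union_eq h
    have := Set.ncard_le_card (nbhd G r S ∪ nbhd G r T)
    have := majority hS
    have := majority hT
    omega
  obtain ⟨z, ⟨u, hu, w, hw⟩, v, hv, w', hw'⟩ := Set.not_disjoint_iff.1 not_disjoint
  refine ⟨u, hu, v, hv, w.append w'.reverse, ?_⟩
  rw [SimpleGraph.Walk.length_append, SimpleGraph.Walk.length_reverse]
  omega

end Expansion

/-! ### Opening a path edge by edge -/

open scoped Classical in
/-- The differences of `f` met along the paths of length at most `j` from `v` when the edges of
the path are opened one after the other, summed over all these paths. -/
def pathGain {V : Type*} [Fintype V] {G : SimpleGraph V} (f : (G.edgeSet → Bool) → ℝ) :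
    ℕ → (G.edgeSet → Bool) → V → ℝ
  | 0, _, _ => 0
  | j + 1, x, v => ∑ u : G.neighborSet v,
      (edgeDiff f ⟨s(v, u), u.2⟩ x + pathGain f j (setEdge x ⟨s(v, u), u.2⟩ true) u)

section PathGain

open scoped Classical

variable {V : Type*} [Fintype V] {G : SimpleGraph V} {f : (G.edgeSet → Bool) → ℝ}

theorem pathGain_nonneg (hf : Monotone f) (j : ℕ) (x : G.edgeSet → Bool) (v : V) :
    0 ≤ pathGain f j x v := by
  induction j generalizing x v with
  | zero => exact le_rfl
  | succ j ih => exact Finset.sum_nonneg fun u _ => add_nonneg (edgeDiff_nonneg hf _ _) (ih _ _)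

theorem pathGain_mono_length (hf : Monotone f) (x : G.edgeSet → Bool) (v : V) :
    Monotone fun j => pathGain f j x v := by
  refine monotone_nat_of_le_succ fun j => ?_
  induction j generalizing x v with
  | zero => exact pathGain_nonneg hf 1 x v
  | succ j ih => exact Finset.sum_le_sum fun u _ => add_le_add_right (ih _ _) _

theorem exists_sub_le_pathGain (hf : Monotone f) {v u : V} (w : G.Walk v u)
    (x : G.edgeSet → Bool) :
    ∃ y ≥ x, u ∈ percoComp G y v ∧ f y - f x ≤ pathGain f w.length x v := by
  induction w generalizing x with
  | nil => exact ⟨x, le_rfl, mem_percoComp_self x _, (sub_self _).le⟩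
  | @cons v z u h w ih =>
    let e : G.edgeSet := ⟨s(v, z), h⟩
    obtain ⟨y, hy, hu, gain⟩ := ih (setEdge x e true)
    have hz : z ∈ percoComp G y v := percoComp_mono hy v (mem_percoComp_setEdge_true h x)
    refine ⟨y, (le_setEdge_true x e).trans hy, percoComp_eq_of_mem hz ▸ hu, ?_⟩
    calc f y - f x ≤ edgeDiff f e x + pathGain f w.length (setEdge x e true) z := by
          linarith [sub_le_edgeDiff hf e x]
      _ ≤ pathGain f (w.length + 1) x v :=
          Finset.single_le_sum (f := fun u : G.neighborSet v => edgeDiff f ⟨s(v, u), u.2⟩ x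
            + pathGain f w.length (setEdge x ⟨s(v, u), u.2⟩ true) u)
            (fun u _ => add_nonneg (edgeDiff_nonneg hf _ _) (pathGain_nonneg hf _ _ _))
            (Finset.mem_univ (⟨z, h⟩ : G.neighborSet v))

theorem DegreeLE.sum_expC_pathGain_succ_le {d : ℕ} (hd : DegreeLE G d) (hf : Monotone f) {p : ℝ}
    (hp : p ∈ Set.Ioc (0 : ℝ) 1) (j : ℕ) :
    ∑ v, expC p (fun x => pathGain f (j + 1) x v)
      ≤ 2 * ∑ e, expC p (edgeDiff f e) + d / p * ∑ v, expC p (fun x => pathGain f j x v) := by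
  have hp' : p ∈ Set.Icc (0 : ℝ) 1 := ⟨hp.1.le, hp.2⟩
  let g (v : V) : ℝ := p⁻¹ * expC p (fun x => pathGain f j x v)
  have hg : 0 ≤ g := fun v =>
    mul_nonneg (inv_nonneg.2 hp'.1) (expC_nonneg hp' fun x => pathGain_nonneg hf j x v)
  have expC_open_le (e : G.edgeSet) (u : V) :
      expC p (fun x => pathGain f j (setEdge x e true) u) ≤ g u := by
    rw [le_inv_mul_iff₀ hp.1]
    exact mul_expC_setEdge_true_le hp' (fun x => pathGain_nonneg hf j x u) e
  have sum_le (v : V) : expC p (fun x => pathGain f (j + 1) x v)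
      ≤ ∑ u : G.neighborSet v, (expC p (edgeDiff f ⟨s(v, u), u.2⟩) + g u) := by
    simp only [pathGain]
    rw [expC_sum]
    exact Finset.sum_le_sum fun u _ => (expC_add _ _ _).trans_le (by gcongr; exact expC_open_le _ _)
  calc ∑ v, expC p (fun x => pathGain f (j + 1) x v)
      ≤ ∑ a : G.Dart, (expC p (edgeDiff f ⟨a.edge, a.edge_mem⟩) + g a.snd) := by
        rw [← sum_dartOfNeighborSet]
        exact Finset.sum_le_sum fun v _ => sum_le v
    _ = 2 * ∑ e, expC p (edgeDiff f e) + ∑ a : G.Dart, g a.fst := by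
        rw [Finset.sum_add_distrib, sum_dart_edge fun e => expC p (edgeDiff f e),
          ← sum_dart_symm fun a => g a.fst]
        rfl
    _ ≤ 2 * ∑ e, expC p (edgeDiff f e) + d * ∑ v, g v := by
        gcongr
        exact hd.sum_dart_fst_le hg
    _ = _ := by rw [← Finset.mul_sum, ← mul_assoc, div_eq_mul_inv]

theorem DegreeLE.sum_expC_pathGain_le {d : ℕ} (hd : DegreeLE G d) (hf : Monotone f) {p B : ℝ}
    (hp : p ∈ Set.Ioc (0 : ℝ) 1) (hB1 : 1 ≤ B) (hB : d / p ≤ B) (j : ℕ) :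
    ∑ v, expC p (fun x => pathGain f j x v) ≤ 2 * (∑ e, expC p (edgeDiff f e)) * (j * B ^ j) := by
  have hp' : p ∈ Set.Icc (0 : ℝ) 1 := ⟨hp.1.le, hp.2⟩
  set D := ∑ e, expC p (edgeDiff f e)
  have hD : 0 ≤ D := Finset.sum_nonneg fun e _ => expC_nonneg hp' (edgeDiff_nonneg hf e)
  induction j with
  | zero => simp [pathGain, expC]
  | succ j ih =>
    have sum_nonneg : 0 ≤ ∑ v, expC p (fun x => pathGain f j x v) :=
      Finset.sum_nonneg fun v _ => expC_nonneg hp' fun x => pathGain_nonneg hf j x v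
    have le_mul_pow : 2 * D ≤ 2 * D * B ^ (j + 1) :=
      le_mul_of_one_le_right (by positivity) (one_le_pow₀ hB1)
    calc ∑ v, expC p (fun x => pathGain f (j + 1) x v)
        ≤ 2 * D + d / p * ∑ v, expC p (fun x => pathGain f j x v) :=
          hd.sum_expC_pathGain_succ_le hf hp j
      _ ≤ 2 * D * B ^ (j + 1) + B * (2 * D * (j * B ^ j)) := by
          gcongr
      _ = 2 * D * ((j + 1 : ℕ) * B ^ (j + 1)) := by
          push_cast
          ring

end PathGain

/-! ### Merging large clusters -/

/-- The set `S` is a union of clusters of the configuration `x`. -/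
def IsClusterUnion {V : Type*} (G : SimpleGraph V) (x : G.edgeSet → Bool) (S : Set V) : Prop :=
  ∀ u ∈ S, percoComp G x u ⊆ S

section Merging

open scoped Classical

variable {V : Type*} {G : SimpleGraph V} {x : G.edgeSet → Bool} {S U : Set V} {v : V}
  {M b k t : ℝ} {d r : ℕ}

theorem isClusterUnion_setOf_le_compSize (k : ℝ) (x : G.edgeSet → Bool) :
    IsClusterUnion G x {v | k ≤ compSize G x v} := fun u hu _ hw => by
  rw [Set.mem_ofPred_eq, compSize_eq_of_mem hw]
  exact hu

theorem IsClusterUnion.diff_percoComp (hS : IsClusterUnion G x S) (v : V) :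
    IsClusterUnion G x (S \ percoComp G x v) := fun u hu _ hw =>
  ⟨hS u hu.1 hw, fun hwv => hu.2 (hwv.trans (mem_percoComp_comm.1 hw))⟩

/-- A smallest admissible `S` works, since removing one of its clusters brings it below `t`. -/
theorem IsClusterUnion.exists_subset_le_ncard_le_ncard_diff [Finite V] (hU : IsClusterUnion G x U)
    (hM : ∀ v ∈ U, compSize G x v ≤ M) (hM0 : 0 ≤ M) (ht : 0 < t) (h : M + 2 * t ≤ U.ncard) :
    ∃ S ⊆ U, IsClusterUnion G x S ∧ t ≤ S.ncard ∧ t ≤ (U \ S).ncard := by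
  obtain ⟨S, ⟨hSU, hS, hSt⟩, hmin⟩ := Set.exists_min_image
    {S | S ⊆ U ∧ IsClusterUnion G x S ∧ t ≤ S.ncard} Set.ncard (Set.toFinite _)
    ⟨U, subset_rfl, hU, by linarith⟩
  obtain ⟨v, hv⟩ : S.Nonempty :=
    Set.nonempty_of_ncard_ne_zero (Nat.cast_pos.1 (ht.trans_le hSt)).ne'
  have diff_card : ((S \ percoComp G x v).ncard : ℝ) = S.ncard - compSize G x v :=
    Set.cast_ncard_sdiff (hS v hv) (Set.toFinite _)
  have diff_lt : ((S \ percoComp G x v).ncard : ℝ) < t := by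
    by_contra! hle
    have := hmin _ ⟨Set.sdiff_subset.trans hSU, hS.diff_percoComp v, hle⟩
    have pos : (0 : ℝ) < compSize G x v := mod_cast compSize_pos x v
    have : (S.ncard : ℝ) ≤ (S \ percoComp G x v).ncard := mod_cast this
    linarith
  refine ⟨S, hSU, hS, hSt, ?_⟩
  rw [Set.cast_ncard_sdiff hSU (Set.toFinite _)]
  linarith [hM v (hSU hv)]

variable [Fintype V]

theorem le_pathGain_largeMass (hk : 0 ≤ k) {u : V} (hu : k ≤ compSize G x u)
    (hv : k ≤ compSize G x v) (hvu : u ∉ percoComp G x v) {w : G.Walk v u} {j : ℕ}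
    (hw : w.length ≤ j) : k ≤ pathGain (largeMass k G) j x v := by
  obtain ⟨y, hxy, hy, gain⟩ := exists_sub_le_pathGain (largeMass_mono hk) w x
  calc k = min (compSize G x u : ℝ) k := (min_eq_right hu).symm
    _ ≤ largeMass k G y - largeMass k G x := min_compSize_le_largeMass_sub hk hxy hy hvu hv
    _ ≤ pathGain (largeMass k G) w.length x v := gain
    _ ≤ pathGain (largeMass k G) j x v := pathGain_mono_length (largeMass_mono hk) x v hw

/-- If no cluster carries almost all of the large mass, the large clusters split into two big
groups, and most vertices of the one are joined to the other by a short path. -/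
theorem CheegerGT.mul_le_sum_pathGain_largeMass (hG : CheegerGT G b) (hb : 0 ≤ b)
    (hd : DegreeLE G d) (hd0 : 0 < d) (hk : 0 ≤ k) (ht : 0 < t)
    (hr : Nat.card V < 2 * ((1 + b / d) ^ r * t)) (hx : largestComp G x + 4 * t ≤ largeMass k G x) :
    t * k ≤ ∑ v, pathGain (largeMass k G) (2 * r) x v := by
  obtain ⟨S, hSU, hS, hSt, hUSt⟩ :=
    (isClusterUnion_setOf_le_compSize k x).exists_subset_le_ncard_le_ncard_diff
      (M := largestComp G x) (t := 2 * t) (fun v _ => mod_cast compSize_le_largestComp x v)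
      (Nat.cast_nonneg _) (by linarith) (by linarith [largeMass_le_ncard hk x])
  set U : Set V := {v | k ≤ compSize G x v}
  let near : Set V := {v ∈ S | ∃ u ∈ U \ S, ∃ w : G.Walk v u, w.length ≤ 2 * r}
  have near_card : t ≤ near.ncard := by
    by_contra! h
    have far_card : t ≤ (S \ near).ncard := by
      rw [Set.cast_ncard_sdiff (Set.sep_subset _ _) (Set.toFinite _)]
      linarith
    obtain ⟨v, hv, u, hu, w, hw⟩ :=
      hG.exists_walk_length_le (T := U \ S) hb hd hd0 ht far_card (by linarith) hr
    exact hv.2 ⟨hv.1, u, hu, w, hw⟩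
  have le_pathGain (v : V) (hv : v ∈ near) : k ≤ pathGain (largeMass k G) (2 * r) x v := by
    obtain ⟨hvS, u, hu, w, hw⟩ := hv
    exact le_pathGain_largeMass hk hu.1 (hSU hvS) (fun h => hu.2 (hS v hvS h)) hw
  calc t * k ≤ near.ncard * k := by gcongr
    _ = ∑ v with v ∈ near, k := by
        rw [Finset.sum_const, nsmul_eq_mul, ← card_filter_mem]
        congr!
    _ ≤ ∑ v with v ∈ near, pathGain (largeMass k G) (2 * r) x v :=
        Finset.sum_le_sum fun v hv => le_pathGain v (Finset.mem_filter.1 hv).2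
    _ ≤ ∑ v, pathGain (largeMass k G) (2 * r) x v :=
        Finset.sum_le_sum_of_subset_of_nonneg (Finset.filter_subset _ _)
          fun v _ _ => pathGain_nonneg (largeMass_mono hk) _ x v

theorem CheegerGT.mul_probC_le_sum_edgeDiff (hG : CheegerGT G b) (hb : 0 ≤ b)
    (hd : DegreeLE G d) (hd0 : 0 < d) (hk : 0 ≤ k) (ht : 0 < t)
    (hr : Nat.card V < 2 * ((1 + b / d) ^ r * t)) {p B : ℝ} (hp : p ∈ Set.Ioc (0 : ℝ) 1)
    (hB1 : 1 ≤ B) (hB : d / p ≤ B) :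
    t * k * probC p {x | largestComp G x + 4 * t ≤ largeMass k G x}
      ≤ 2 * (∑ e, expC p (edgeDiff (largeMass k G) e)) * ((2 * r : ℕ) * B ^ (2 * r)) :=
  calc t * k * probC p {x | largestComp G x + 4 * t ≤ largeMass k G x}
      ≤ expC p fun x => ∑ v, pathGain (largeMass k G) (2 * r) x v :=
        mul_probC_le_expC ⟨hp.1.le, hp.2⟩
          (fun x => Finset.sum_nonneg fun v _ => pathGain_nonneg (largeMass_mono hk) _ x v)
          fun _ => hG.mul_le_sum_pathGain_largeMass hb hd hd0 hk ht hr
    _ = ∑ v, expC p fun x => pathGain (largeMass k G) (2 * r) x v :=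
        expC_sum p _ fun v x => pathGain (largeMass k G) (2 * r) x v
    _ ≤ _ := hd.sum_expC_pathGain_le (largeMass_mono hk) hp hB1 hB (2 * r)

end Merging

/-! ### The threshold window -/

/-- The event that some cluster contains at least the fraction `c` of the vertices. -/
def giantEvent {V : Type*} (G : SimpleGraph V) (c : ℝ) : Set (G.edgeSet → Bool) :=
  {x | c * Nat.card V ≤ largestComp G x}

section GiantEvent

open scoped Classical

variable {V : Type*} {G : SimpleGraph V} {c p : ℝ} {d : ℕ}

theorem isUpperSet_giantEvent [Finite V] (c : ℝ) : IsUpperSet (giantEvent G c) :=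
  fun _ _ hxy hx => le_trans (α := ℝ) hx (mod_cast largestComp_mono hxy)

theorem giantEvent_eq_univ [Finite V] (hc : c ≤ 1) (hV : Nat.card V ≤ 1) :
    giantEvent G c = Set.univ := by
  refine Set.eq_univ_of_forall fun x => ?_
  have card_le : Nat.card V ≤ largestComp G x := by
    rcases isEmpty_or_nonempty V with _ | ⟨⟨v⟩⟩
    · simp
    · exact hV.trans ((compSize_pos x v).trans_le (compSize_le_largestComp x v))
  exact (mul_le_of_le_one_left (Nat.cast_nonneg _) hc).trans (mod_cast card_le)

theorem compSize_le_two_mul_sum_open [Fintype V] {x : G.edgeSet → Bool} {v : V}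
    (h : 1 < compSize G x v) : (compSize G x v : ℝ) ≤ 2 * ∑ e, if x e then 1 else 0 := by
  have sub : Finset.univ.filter (· ∈ percoComp G x v)
      ⊆ (Finset.univ.filter fun a : G.Dart => x ⟨a.edge, a.edge_mem⟩).image (·.fst) := by
    intro u hu
    have hu : u ∈ percoComp G x v := (Finset.mem_filter.1 hu).2
    rw [← compSize_eq_of_mem hu] at h
    obtain ⟨w, hw, hwu⟩ := Set.exists_ne_of_one_lt_ncard h u
    obtain ⟨z, hz, -⟩ :=
      ((SimpleGraph.reachable_iff_reflTransGen u w).1 hw).cases_head.resolve_left hwu.symm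
    obtain ⟨huz, hopen⟩ := percoGraph_adj.1 hz
    exact Finset.mem_image.2 ⟨⟨(u, z), huz⟩, Finset.mem_filter.2 ⟨Finset.mem_univ _, hopen⟩, rfl⟩
  calc (compSize G x v : ℝ) = (Finset.univ.filter (· ∈ percoComp G x v)).card := by
        rw [card_filter_mem, compSize]
    _ ≤ (Finset.univ.filter fun a : G.Dart => x ⟨a.edge, a.edge_mem⟩).card :=
        mod_cast (Finset.card_le_card sub).trans Finset.card_image_le
    _ = 2 * ∑ e, if x e then 1 else 0 := by
        rw [← sum_dart_edge fun e => if x e then (1 : ℝ) else 0, Finset.sum_boole]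

theorem DegreeLE.mul_probC_giantEvent_le [Finite V] (hd : DegreeLE G d)
    (hp : p ∈ Set.Icc (0 : ℝ) 1) (hc : 1 < c * Nat.card V) :
    c * probC p (giantEvent G c) ≤ d * p := by
  have := Fintype.ofFinite V
  have card_pos : (0 : ℝ) < Nat.card V := by
    refine lt_of_le_of_ne (Nat.cast_nonneg _) fun h => ?_
    rw [← h, mul_zero] at hc
    linarith
  have : Nonempty V := (Nat.card_pos_iff.1 (Nat.cast_pos.1 card_pos)).1
  have open_card (x) (hx : x ∈ giantEvent G c) :
      c * Nat.card V ≤ 2 * ∑ e, if x e then (1 : ℝ) else 0 := by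
    obtain ⟨v, hv⟩ := exists_compSize_eq_largestComp x
    have hx : c * Nat.card V ≤ compSize G x v := hv ▸ hx
    exact hx.trans (compSize_le_two_mul_sum_open (mod_cast hc.trans_le hx))
  refine le_of_mul_le_mul_right ?_ card_pos
  calc c * probC p (giantEvent G c) * Nat.card V
      = c * Nat.card V * probC p (giantEvent G c) := by ring
    _ ≤ expC p fun x : G.edgeSet → Bool => 2 * ∑ e, if x e then (1 : ℝ) else 0 :=
        mul_probC_le_expC hp (fun x => by positivity) open_card
    _ = 2 * Nat.card G.edgeSet * p := by
        simp only [expC_const_mul, expC_sum, expC_indicator_open, Finset.sum_const, nsmul_eq_mul,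
          Finset.card_univ, Nat.card_eq_fintype_card, mul_assoc]
    _ ≤ d * Nat.card V * p := mul_le_mul_of_nonneg_right hd.two_mul_card_edgeSet_le hp.1
    _ = d * p * Nat.card V := by ring

end GiantEvent

/-- The conditions on a cluster size `k`, a mass `t` and a radius `r` under which the threshold
window of an expander with `N` vertices is of order `t / N`. -/
structure Scales (b : ℝ) (d : ℕ) (B c α N k t : ℝ) (r : ℕ) : Prop where
  one_le : 1 ≤ k
  size_le : k ≤ t
  mass_le : 4 * t ≤ c * N
  mass_le' : 10 * t ≤ (1 - c) * N
  variance_lt : d * N * k ^ 2 < t ^ 2 * (α / 2)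
  loss_le : k + d * k ^ 2 ≤ c * (1 - c) / 8 * N
  radius_gt : N < 2 * ((1 + b / d) ^ r * t)
  merging_le : 8 * N ^ 2 * ((2 * r : ℕ) * B ^ (2 * r)) ≤ α * t ^ 2 * k

theorem Scales.pos {b B c α N k t : ℝ} {d r : ℕ} (h : Scales b d B c α N k t r) : 0 < t :=
  zero_lt_one.trans_le (h.one_le.trans h.size_le)

theorem Scales.one_lt_mul {b B c α N k t : ℝ} {d r : ℕ} (h : Scales b d B c α N k t r) :
    1 < c * N := by
  linarith [h.one_le, h.size_le, h.mass_le]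

theorem Scales.card_pos {V : Type*} {b B c α k t : ℝ} {d r : ℕ}
    (h : Scales b d B c α (Nat.card V) k t r) : (0 : ℝ) < Nat.card V := by
  refine lt_of_le_of_ne (Nat.cast_nonneg _) fun h0 => ?_
  have := h.one_lt_mul
  rw [← h0, mul_zero] at this
  linarith

section Window

open scoped Classical

variable {V : Type*} [Fintype V] {G : SimpleGraph V} {b B c α k t p q s : ℝ} {d r : ℕ}

theorem Scales.varC_largeMass_lt (h : Scales b d B c α (Nat.card V) k t r) (hd : DegreeLE G d)
    (hp : p ∈ Set.Icc (0 : ℝ) 1) {a : ℝ} (ha : α / 2 ≤ a) :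
    varC p (largeMass k G) < t ^ 2 * a :=
  (varC_largeMass_le hp hd (zero_le_one.trans h.one_le)).trans_lt
    (h.variance_lt.trans_le (by gcongr))

theorem Scales.lt_expC_largeMass (h : Scales b d B c α (Nat.card V) k t r) (hd : DegreeLE G d)
    (hα : 0 ≤ α) (hp : p ∈ Set.Icc (0 : ℝ) 1) (hP : α ≤ probC p (giantEvent G c)) :
    c * Nat.card V - 2 * t < expC p (largeMass k G) := by
  have : Nonempty V := (Nat.card_pos_iff.1 (Nat.cast_pos.1 h.card_pos)).1
  have le_largeMass (x) (hx : x ∈ giantEvent G c) : c * Nat.card V - t ≤ largeMass k G x := by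
    obtain ⟨v, hv⟩ := exists_compSize_eq_largestComp x
    have hx : c * Nat.card V ≤ compSize G x v := hv ▸ hx
    linarith [compSize_sub_le_largeMass k x v, h.size_le]
  linarith [sub_lt_expC_of_varC_lt hp h.pos.le le_largeMass
    (h.varC_largeMass_lt hd hp (by linarith))]

theorem Scales.probC_le_of_sum_edgeDiff_le (h : Scales b d B c α (Nat.card V) k t r)
    (hG : CheegerGT G b) (hb : 0 ≤ b) (hd : DegreeLE G d) (hd0 : 0 < d) (hB1 : 1 ≤ B)
    (hs : s ∈ Set.Ioc (0 : ℝ) 1) (hB : d / s ≤ B)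
    (hD : ∑ e, expC s (edgeDiff (largeMass k G) e) ≤ 2 * Nat.card V ^ 2 / t) :
    probC s {x | largestComp G x + 4 * t ≤ largeMass k G x} ≤ α / 2 := by
  have ht := h.pos
  have hk : 0 < k := zero_lt_one.trans_le h.one_le
  refine le_of_mul_le_mul_left ?_ (mul_pos ht hk)
  calc t * k * probC s {x | largestComp G x + 4 * t ≤ largeMass k G x}
      ≤ 2 * (∑ e, expC s (edgeDiff (largeMass k G) e)) * ((2 * r : ℕ) * B ^ (2 * r)) :=
        hG.mul_probC_le_sum_edgeDiff hb hd hd0 hk.le ht h.radius_gt hs hB1 hB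
    _ ≤ 2 * (2 * Nat.card V ^ 2 / t) * ((2 * r : ℕ) * B ^ (2 * r)) := by gcongr
    _ = 8 * Nat.card V ^ 2 * ((2 * r : ℕ) * B ^ (2 * r)) / (2 * t) := by
        field_simp
        ring
    _ ≤ α * t ^ 2 * k / (2 * t) :=
        div_le_div_of_nonneg_right h.merging_le (by positivity)
    _ = t * k * (α / 2) := by field_simp

theorem Scales.expC_largeMass_lt (h : Scales b d B c α (Nat.card V) k t r) (hd : DegreeLE G d)
    (hs : s ∈ Set.Icc (0 : ℝ) 1) (hP : probC s (giantEvent G c) ≤ 1 - α)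
    (hM : probC s {x | largestComp G x + 4 * t ≤ largeMass k G x} ≤ α / 2) :
    expC s (largeMass k G) < c * Nat.card V + 5 * t := by
  set M : Set (G.edgeSet → Bool) := {x | largestComp G x + 4 * t ≤ largeMass k G x}
  set R : Set (G.edgeSet → Bool) := (giantEvent G c ∪ M)ᶜ
  have largeMass_le (x) (hx : x ∈ R) : largeMass k G x ≤ c * Nat.card V + 4 * t := by
    obtain ⟨small, no_merge⟩ := not_or.1 hx
    have small : largestComp G x < c * Nat.card V := not_le.1 small
    have no_merge : largeMass k G x < largestComp G x + 4 * t := not_le.1 no_merge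
    linarith
  have le_probC : α / 2 ≤ probC s R := by
    have cover := probC_le_add_of_subset_union hs (Set.union_compl_self (giantEvent G c ∪ M)).ge
    rw [probC_univ] at cover
    linarith [probC_le_add_of_subset_union hs (subset_refl (giantEvent G c ∪ M))]
  linarith [expC_lt_add_of_varC_lt hs h.pos.le largeMass_le (h.varC_largeMass_lt hd hs le_probC)]

theorem Scales.mul_card_le_sum_edgeDiff (h : Scales b d B c α (Nat.card V) k t r)
    (hG : CheegerGT G b) (hb : 0 ≤ b) (hd : DegreeLE G d) (hc : c ≤ 1)
    (hs : s ∈ Set.Icc (0 : ℝ) 1) (hlow : c * Nat.card V - 2 * t ≤ expC s (largeMass k G))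
    (hup : expC s (largeMass k G) ≤ c * Nat.card V + 5 * t) :
    b * c * (1 - c) / 16 * Nat.card V ≤ ∑ e, expC s (edgeDiff (largeMass k G) e) := by
  have hN := h.card_pos
  set m := expC s (largeMass k G)
  set N : ℝ := (Nat.card V : ℝ)
  have product : c / 2 * N * ((1 - c) / 2 * N) ≤ m * (N - m) := by
    have := h.mass_le
    have := h.mass_le'
    have := h.pos
    exact mul_le_mul (by linarith) (by linarith) (mul_nonneg (by linarith) hN.le) (by linarith)
  have loss : (k + d * k ^ 2) * N ≤ c * (1 - c) / 8 * N * N := by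
    gcongr
    exact h.loss_le
  refine le_of_mul_le_mul_left ?_ (mul_pos two_pos hN)
  calc 2 * N * (b * c * (1 - c) / 16 * N) = b * (c * (1 - c) / 8 * N * N) := by ring
    _ ≤ b * (m * (N - m) - (k + d * k ^ 2) * N) := by
        gcongr
        linarith
    _ ≤ _ := hG.expC_largeMass_le_sum_edgeDiff hs hb hd h.one_le

/-- The expected large mass barely grows from `p` to `s`, whereas its derivative is of the order
of the number of vertices as long as it stays away from `0` and from the number of vertices. -/
theorem Scales.sub_mul_card_le (h : Scales b d B c α (Nat.card V) k t r) (hG : CheegerGT G b)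
    (hb : 0 < b) (hd : DegreeLE G d) (hc : c ∈ Set.Ioo (0 : ℝ) 1) (hp : 0 ≤ p) (hps : p < s)
    (hs : s ≤ 1) (hlow : c * Nat.card V - 2 * t ≤ expC p (largeMass k G))
    (hup : expC s (largeMass k G) ≤ c * Nat.card V + 5 * t) :
    (s - p) * Nat.card V ≤ 112 / (b * c * (1 - c)) * t := by
  obtain ⟨u, hu, slope⟩ := exists_sum_expC_edgeDiff_eq_slope (largeMass k G) hps
  have mono := expC_monotoneOn (largeMass_mono (G := G) (zero_le_one.trans h.one_le))
  have hp' : p ∈ Set.Icc (0 : ℝ) 1 := ⟨hp, hps.le.trans hs⟩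
  have hs' : s ∈ Set.Icc (0 : ℝ) 1 := ⟨hp.trans hps.le, hs⟩
  have hu' : u ∈ Set.Icc (0 : ℝ) 1 := ⟨hp.trans hu.1.le, hu.2.le.trans hs⟩
  have le_slope := h.mul_card_le_sum_edgeDiff hG hb.le hd hc.2.le hu'
    (hlow.trans (mono hp' hu' hu.1.le)) ((mono hu' hs' hu.2.le).trans hup)
  rw [slope, le_div_iff₀ (sub_pos.2 hps)] at le_slope
  have : 0 < b * c * (1 - c) := mul_pos (mul_pos hb hc.1) (sub_pos.2 hc.2)
  rw [div_mul_eq_mul_div, le_div_iff₀ this]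
  linarith

theorem Scales.exists_gt_expC_largeMass_lt (h : Scales b d B c α (Nat.card V) k t r)
    (hG : CheegerGT G b) (hb : 0 ≤ b) (hd : DegreeLE G d) (hd0 : 0 < d) (hB1 : 1 ≤ B)
    (hp : 0 < p) (hB : d / p ≤ B) (hq : q ≤ 1) (hpq : t < (q - p) * Nat.card V)
    (hQ : probC q (giantEvent G c) ≤ 1 - α) :
    ∃ s ∈ Set.Ioo ((p + q) / 2) q, expC s (largeMass k G) < c * Nat.card V + 5 * t := by
  have hk : 0 ≤ k := zero_le_one.trans h.one_le
  have hpq' : p < q := sub_pos.1 (pos_of_mul_pos_left (h.pos.trans hpq) h.card_pos.le)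
  obtain ⟨s, hs, slope⟩ := exists_sum_expC_edgeDiff_eq_slope (largeMass k G)
    (show (p + q) / 2 < q by linarith)
  have hps : p < s := by linarith [hs.1]
  have hs' : s ∈ Set.Ioc (0 : ℝ) 1 := ⟨hp.trans hps, hs.2.le.trans hq⟩
  have hs'' : s ∈ Set.Icc (0 : ℝ) 1 := ⟨hs'.1.le, hs'.2⟩
  have hq' : q ∈ Set.Icc (0 : ℝ) 1 := ⟨(hp.trans hpq').le, hq⟩
  have expC_le : expC q (largeMass k G) ≤ Nat.card V :=
    (expC_mono hq' (largeMass_le_card hk)).trans_eq (expC_const q _)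
  have expC_nonneg : 0 ≤ expC ((p + q) / 2) (largeMass k G) :=
    expC_nonneg ⟨by linarith, by linarith⟩ (largeMass_nonneg k)
  have slope_le : ∑ e, expC s (edgeDiff (largeMass k G) e) ≤ 2 * Nat.card V ^ 2 / t := by
    have ht := h.pos
    have hN := h.card_pos
    rw [slope, div_le_div_iff₀ (by linarith) ht]
    calc _ ≤ (Nat.card V : ℝ) * t := by gcongr; linarith
      _ ≤ Nat.card V * ((q - p) * Nat.card V) := by gcongr
      _ = 2 * Nat.card V ^ 2 * (q - (p + q) / 2) := by ring
  refine ⟨s, hs, h.expC_largeMass_lt hd hs''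
    ((probC_monotoneOn (isUpperSet_giantEvent c) hs'' hq' hs.2.le).trans hQ)
    (h.probC_le_of_sum_edgeDiff_le hG hb hd hd0 hB1 hs' (le_trans ?_ hB) slope_le)⟩
  gcongr

end Window

theorem Scales.window_mul_card_le {V : Type*} [Finite V] {G : SimpleGraph V} {b B c α k t p q : ℝ}
    {d r : ℕ} (h : Scales b d B c α (Nat.card V) k t r) (hG : CheegerGT G b) (hb : 0 < b)
    (hd : DegreeLE G d) (hd0 : 0 < d) (hc : c ∈ Set.Ioo (0 : ℝ) 1) (hα : 0 < α)
    (hB1 : 1 ≤ B) (hB : d ^ 2 / (c * α) ≤ B) (hp : p ∈ Set.Icc (0 : ℝ) 1) (hq : q ≤ 1)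
    (hP : α ≤ probC p (giantEvent G c)) (hQ : probC q (giantEvent G c) ≤ 1 - α) :
    (q - p) * Nat.card V ≤ (1 + 224 / (b * c * (1 - c))) * t := by
  have := Fintype.ofFinite V
  have hc0 := hc.1
  have hc1 := sub_pos.2 hc.2
  have ht := h.pos
  rcases le_or_gt ((q - p) * Nat.card V) t with hpq | hpq
  · have : 0 ≤ 224 / (b * c * (1 - c)) * t := by positivity
    linarith
  have le_mul_p : c * α ≤ d * p :=
    (mul_le_mul_of_nonneg_left hP hc0.le).trans (hd.mul_probC_giantEvent_le hp h.one_lt_mul)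
  have p_pos : 0 < p := pos_of_mul_pos_right ((mul_pos hc0 hα).trans_le le_mul_p) d.cast_nonneg
  have div_le : d / p ≤ B := by
    refine le_trans ?_ hB
    rw [div_le_div_iff₀ p_pos (mul_pos hc0 hα), sq, mul_assoc]
    gcongr
  obtain ⟨s, hs, hup⟩ := h.exists_gt_expC_largeMass_lt hG hb.le hd hd0 hB1 p_pos div_le hq hpq hQ
  have hps : p < s := by
    have := pos_of_mul_pos_left (ht.trans hpq) h.card_pos.le
    linarith [hs.1]
  have half := h.sub_mul_card_le hG hb hd hc hp.1 hps (hs.2.le.trans hq)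
    (h.lt_expC_largeMass hd hα.le hp hP).le hup.le
  calc (q - p) * Nat.card V ≤ 2 * (s - p) * Nat.card V := by gcongr; linarith [hs.1]
    _ ≤ 2 * (112 / (b * c * (1 - c)) * t) := by rw [mul_assoc]; gcongr
    _ ≤ (1 + 224 / (b * c * (1 - c))) * t := by
        have : 2 * (112 / (b * c * (1 - c)) * t) = 224 / (b * c * (1 - c)) * t := by ring
        linarith

/-! ### Choice of the scales -/

theorem eventually_mul_pow_lt_exp_mul (C : ℝ) (n : ℕ) {a : ℝ} (ha : 0 < a) :
    ∀ᶠ x : ℝ in atTop, C * x ^ n < Real.exp (a * x) := by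
  have small := ((isLittleO_pow_exp_pos_mul_atTop n ha).const_mul_left C).def one_half_pos
  filter_upwards [small] with x hx
  have pos := Real.exp_pos (a * x)
  rw [Real.norm_of_nonneg pos.le] at hx
  linarith [Real.le_norm_self (C * x ^ n)]

theorem exists_forall_exists_lt_pow_mul_pow_le {γ : ℝ} (hγ : 1 < γ) (B : ℝ) :
    ∃ κ : ℕ, ∀ x : ℝ, 1 ≤ x →
      ∃ r : ℕ, x < γ ^ r ∧ (2 * r : ℕ) * B ^ (2 * r) ≤ (γ * x) ^ κ := by
  obtain ⟨κ, hκ⟩ := pow_unbounded_of_one_lt (4 * B ^ 2) hγ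
  have : 0 < γ := zero_lt_one.trans hγ
  refine ⟨κ, fun x hx => ?_⟩
  obtain ⟨n, hn, hn'⟩ := exists_nat_pow_near hx hγ
  have two_mul_le : ((2 * (n + 1) : ℕ) : ℝ) ≤ 4 ^ (n + 1) := by
    have : 2 * (n + 1) ≤ 4 ^ (n + 1) := by
      rw [show 4 = 2 ^ 2 by rfl, ← pow_mul]
      exact Nat.lt_two_pow_self.le
    exact_mod_cast this
  refine ⟨n + 1, hn', ?_⟩
  calc ((2 * (n + 1) : ℕ) : ℝ) * B ^ (2 * (n + 1))
      ≤ 4 ^ (n + 1) * B ^ (2 * (n + 1)) :=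
        mul_le_mul_of_nonneg_right two_mul_le ((even_two_mul _).pow_nonneg B)
    _ = (4 * B ^ 2) ^ (n + 1) := by rw [mul_pow, ← pow_mul]
    _ ≤ (γ ^ κ) ^ (n + 1) := by gcongr
    _ = (γ * γ ^ n) ^ κ := by rw [← pow_succ', ← pow_mul, ← pow_mul, mul_comm]
    _ ≤ (γ * x) ^ κ := by gcongr

theorem scales_pow_four_div {b : ℝ} {d : ℕ} {B c α k L : ℝ} {r : ℕ} (hc : c ∈ Set.Ioo (0 : ℝ) 1)
    (hα : 0 < α) (hL : 1 ≤ L) (hLk : L ≤ k) (mass : 4 ≤ c * L) (mass' : 10 ≤ (1 - c) * L)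
    (variance : 2 * d / α * L ^ 2 < k) (loss : 8 * (1 + d) / (c * (1 - c)) ≤ k)
    (radius : L < (1 + b / d) ^ r)
    (merging : 8 / α * ((2 * r : ℕ) * B ^ (2 * r)) * L ^ 2 ≤ k) :
    Scales b d B c α (k ^ 4) k (k ^ 4 / L) r := by
  have hL0 : 0 < L := zero_lt_one.trans_le hL
  have hk : 1 ≤ k := hL.trans hLk
  have hk0 : 0 < k := zero_lt_one.trans_le hk
  have hc0 := hc.1
  have hc1 := sub_pos.2 hc.2
  have hk2 : k ≤ k ^ 2 := le_self_pow₀ hk two_ne_zero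
  refine ⟨hk, ?_, ?_, ?_, ?_, ?_, ?_, ?_⟩
  · rw [le_div_iff₀ hL0]
    calc k * L ≤ k * k := by gcongr
      _ = k ^ 2 := (sq k).symm
      _ ≤ k ^ 4 := pow_le_pow_right₀ hk (by norm_num)
  · rw [mul_div_assoc', div_le_iff₀ hL0]
    nlinarith [pow_pos hk0 4]
  · rw [mul_div_assoc', div_le_iff₀ hL0]
    nlinarith [pow_pos hk0 4]
  · have : 2 * d / α * L ^ 2 < k ^ 2 := variance.trans_le hk2
    calc d * k ^ 4 * k ^ 2 = 2 * d / α * L ^ 2 * (k ^ 6 / L ^ 2 * (α / 2)) := by field_simp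
      _ < k ^ 2 * (k ^ 6 / L ^ 2 * (α / 2)) := by gcongr
      _ = (k ^ 4 / L) ^ 2 * (α / 2) := by ring
  · have : 8 * (1 + d) / (c * (1 - c)) ≤ k ^ 2 := loss.trans hk2
    calc k + d * k ^ 2 ≤ k ^ 2 + d * k ^ 2 := by gcongr
      _ = c * (1 - c) / 8 * (8 * (1 + d) / (c * (1 - c)) * k ^ 2) := by field_simp
      _ ≤ c * (1 - c) / 8 * (k ^ 2 * k ^ 2) := by gcongr
      _ = c * (1 - c) / 8 * k ^ 4 := by ring
  · calc k ^ 4 = L * (k ^ 4 / L) := by field_simp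
      _ < (1 + b / d) ^ r * (k ^ 4 / L) := by gcongr
      _ ≤ 2 * ((1 + b / d) ^ r * (k ^ 4 / L)) :=
        le_mul_of_one_le_left (mul_nonneg (hL0.le.trans radius.le) (by positivity)) one_le_two
  · calc 8 * (k ^ 4) ^ 2 * ((2 * r : ℕ) * B ^ (2 * r))
        = 8 / α * ((2 * r : ℕ) * B ^ (2 * r)) * L ^ 2 * (α * (k ^ 4 / L) ^ 2) := by field_simp
      _ ≤ k * (α * (k ^ 4 / L) ^ 2) := by gcongr
      _ = α * (k ^ 4 / L) ^ 2 * k := by ring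

theorem eventually_exists_scales {b : ℝ} (hb : 0 < b) {d : ℕ} (hd0 : 0 < d) (B : ℝ) {c α : ℝ}
    (hc : c ∈ Set.Ioo (0 : ℝ) 1) (hα : 0 < α) :
    ∀ᶠ N : ℝ in atTop, ∃ k r, Scales b d B c α N k (N / Real.log N) r := by
  have hγ : 1 < 1 + b / d := lt_add_of_pos_right 1 (by positivity)
  obtain ⟨κ, hκ⟩ := exists_forall_exists_lt_pow_mul_pow_le hγ B
  have le_exp (C : ℝ) (n : ℕ) := Real.tendsto_log_atTop.eventually
    (eventually_mul_pow_lt_exp_mul C n (a := 1 / 4) (by norm_num))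
  have le_log (C : ℝ) := Real.tendsto_log_atTop.eventually_ge_atTop C
  filter_upwards [eventually_gt_atTop 0, le_log 1, le_log (4 / c), le_log (10 / (1 - c)),
    le_exp 1 1, le_exp (2 * d / α) 2, le_exp (8 * (1 + d) / (c * (1 - c))) 0,
    le_exp (8 / α * (1 + b / d) ^ κ) (κ + 2)] with N hN hL mass mass' hLk variance loss merging
  set L := Real.log N
  obtain ⟨r, radius, size⟩ := hκ L hL
  have pow_four : Real.exp (1 / 4 * L) ^ 4 = N := by
    rw [← Real.exp_nat_mul, ← Real.exp_log hN]
    congr 1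
    push_cast
    ring
  rw [← pow_four]
  refine ⟨_, r, scales_pow_four_div hc hα hL (by simpa using hLk.le)
    ((div_le_iff₀' hc.1).1 mass) ((div_le_iff₀' (sub_pos.2 hc.2)).1 mass') variance
    (by simpa using loss.le) radius (le_trans ?_ merging.le)⟩
  calc 8 / α * ((2 * r : ℕ) * B ^ (2 * r)) * L ^ 2 ≤ 8 / α * ((1 + b / d) * L) ^ κ * L ^ 2 := by
        gcongr
    _ = 8 / α * (1 + b / d) ^ κ * L ^ (κ + 2) := by rw [mul_pow]; ring

theorem stmt1_general (b : ℝ) (hb : 0 < b) (d : ℕ) (α : ℝ) (hα0 : 0 < α) (c : ℝ)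
    (hc : c ∈ Set.Ioo (0 : ℝ) 1) :
    ∃ C : ℝ, ∀ (V : Type*) [Finite V] (G : SimpleGraph V), DegreeLE G d → CheegerGT G b →
      ∀ p ∈ Set.Icc (0 : ℝ) 1, ∀ q ∈ Set.Icc (0 : ℝ) 1,
        probC p (giantEvent G c) = α → probC q (giantEvent G c) = 1 - α →
          q - p ≤ C * (Real.log (Nat.card V))⁻¹ := by
  set B : ℝ := 1 + ((d + 1 : ℕ) : ℝ) ^ 2 / (c * α)
  obtain ⟨N₀, hN₀⟩ := eventually_atTop.1 (eventually_exists_scales hb d.succ_pos B hc hα0)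
  refine ⟨max (1 + 224 / (b * c * (1 - c))) N₀, fun V _ G hd hG p hp q hq hP hQ => ?_⟩
  have one_lt_card : 1 < Nat.card V := by
    by_contra! hV
    rw [giantEvent_eq_univ hc.2.le hV, probC_univ] at hP hQ
    linarith
  have log_pos : 0 < Real.log (Nat.card V) := Real.log_pos (by exact_mod_cast one_lt_card)
  rw [← div_eq_mul_inv, le_div_iff₀ log_pos]
  rcases lt_or_ge (Nat.card V : ℝ) N₀ with small | large
  · calc (q - p) * Real.log (Nat.card V) ≤ 1 * Real.log (Nat.card V) := by
          gcongr
          linarith [hp.1, hq.2]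
      _ ≤ Nat.card V := by
          rw [one_mul]
          exact Real.log_le_self (Nat.cast_nonneg _)
      _ ≤ _ := small.le.trans (le_max_right _ _)
  · obtain ⟨k, r, h⟩ := hN₀ _ large
    have window := h.window_mul_card_le hG hb (hd.mono d.le_succ) d.succ_pos hc hα0
      (le_add_of_nonneg_right (div_nonneg (sq_nonneg _) (mul_pos hc.1 hα0).le))
      (le_add_of_nonneg_left zero_le_one) hp hq.2 hP.ge hQ.le
    rw [mul_div_assoc', le_div_iff₀ log_pos, mul_right_comm] at window
    exact (le_of_mul_le_mul_right window h.card_pos).trans (le_max_left _ _)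

theorem le_abs_rpow_mul_rpow_neg {x C L s : ℝ} (hx : x ≤ 1) (hL : 0 ≤ L)
    (hs : s ∈ Set.Ioc (0 : ℝ) 1) (h : x ≤ C * L⁻¹) : x ≤ |C| ^ s * L ^ (-s) := by
  rcases le_or_gt x 0 with hx0 | hx0
  · exact hx0.trans (by positivity)
  calc x ≤ x ^ s := Real.self_le_rpow_of_le_one hx0.le hx hs.2
    _ ≤ (|C| * L⁻¹) ^ s := by
        gcongr
        · exact hs.1.le
        · exact h.trans (by gcongr; exact le_abs_self C)
    _ = |C| ^ s * L ^ (-s) := by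
        rw [Real.mul_rpow (abs_nonneg C) (by positivity), Real.inv_rpow hL, Real.rpow_neg hL]

/-- the width of the threshold for having a component of size at least `c|V_n|`
is at most `C₃ (log |V_n|)^{-1/3}`, with `C₃` depending only on `c`, `α`, `b`, `d`.
Here `pa` plays the role of `p_{n,α}(c)` and `pb` of `p_{n,1-α}(c)`. -/
theorem stmt1 (b : ℝ) (hb : 0 < b) (d : ℕ) (α : ℝ) (hα0 : 0 < α) (hα : α < 1 / 2)
    (c : ℝ) (hc : c ∈ Set.Ioo (0 : ℝ) 1) :
    ∃ C3 : ℝ, ∀ (E : ExpanderSeq b d) (n : ℕ) (pa pb : ℝ),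
      pa ∈ Set.Icc (0 : ℝ) 1 → pb ∈ Set.Icc (0 : ℝ) 1 →
      probC pa {x : (E.G n).edgeSet → Bool |
          c * (Nat.card (E.V n) : ℝ) ≤ (largestComp (E.G n) x : ℝ)} = α →
      probC pb {x : (E.G n).edgeSet → Bool |
          c * (Nat.card (E.V n) : ℝ) ≤ (largestComp (E.G n) x : ℝ)} = 1 - α →
      pb - pa ≤ C3 * (Real.log (Nat.card (E.V n))) ^ (-(1 / 3) : ℝ) := by
  obtain ⟨C, hC⟩ := stmt1_general b hb d α hα0 c hc
  refine ⟨|C| ^ (1 / 3 : ℝ), fun E n pa pb hpa hpb hPa hPb => ?_⟩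
  have := E.finV n
  exact le_abs_rpow_mul_rpow_neg (by linarith [hpa.1, hpb.2]) (Real.log_natCast_nonneg _)
    (by norm_num) (hC (E.V n) (E.G n) (E.degree_le n) (E.cheeger_gt n) pa hpa pb hpb hPa hPb)
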